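/- arXiv:1304.5392 — 3 statements merged into one kernel-verified Lean document; each statement's English description precedes it below -/
import Mathlib

section
/- For a nonzero real number r and a positive real t, define H_r(t) = ((√(8 + t^(2r)) + t^r)/4)^(1/r), and define H_0(t) = t^(1/3). Then for real numbers α, β, the double inequality H_α(cos x) < sin(x)/x < H_β(cos x) holds for every x ∈ (0, π/2) if and only if α ≤ 3/5 and β ≥ (ln 2)/(2(ln π − ln 2)). -/
open Real Set

/-- The function `H_r` from the paper. -/
noncomputable def Hfun (r t : ℝ) : ℝ :=
  if r = 0 then t ^ ((1 : ℝ) / 3)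
  else ((Real.sqrt (8 + t ^ (2 * r)) + t ^ r) / 4) ^ (1 / r)

/-!
`Hfun r t` is the positive solution `h` of `powMean r 1 (t * h) = h ^ 2`, so both inequalities
compare `powMean r 1 (cos x * sinc x)` with `sinc x ^ 2`, that is, they concern the sign of
`powMeanGap r x`. The derivative of `powMeanGap r` has the sign of `logOdds r`, whose derivative has
the sign of `r - criticalExponent x`, and both functions tend to `0` at `0⁺`. Since
`criticalExponent` increases strictly from its limit `3 / 5` at `0⁺`, the gap is negative on
`(0, π / 2)` if `r ≤ 3 / 5` and positive near `0` if `3 / 5 < r`. In the latter case it first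
increases and then possibly decreases, so it is positive on `(0, π / 2)` exactly when its value at
`π / 2` is nonnegative, which is the condition on `β`. The monotonicity of `criticalExponent` comes
from the Cusa–Huygens inequality and the monotone form of L'Hôpital's rule.
-/

open Filter Topology

section OneSidedLimit

variable {α β : Type*} [LinearOrder α] [DenselyOrdered α] [TopologicalSpace α] [OrderTopology α]
  [Preorder β] [TopologicalSpace β] [OrderClosedTopology β] {f : α → β} {a b : α} {l : β}

theorem lt_of_strictMonoOn_Ioc_of_tendsto_nhdsGT (hab : a < b) (hf : StrictMonoOn f (Ioc a b))
    (hl : Tendsto f (𝓝[>] a) (𝓝 l)) : l < f b := by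
  obtain ⟨c, hac, hcb⟩ := exists_between hab
  have : (𝓝[>] a).NeBot := nhdsGT_neBot_of_exists_gt ⟨c, hac⟩
  have hlc : l ≤ f c := le_of_tendsto hl <| by
    filter_upwards [Ioo_mem_nhdsGT hac] with z hz
    exact (hf ⟨hz.1, (hz.2.trans hcb).le⟩ ⟨hac, hcb.le⟩ hz.2).le
  exact hlc.trans_lt (hf ⟨hac, hcb.le⟩ ⟨hab, le_rfl⟩ hcb)

theorem lt_of_strictAntiOn_Ioc_of_tendsto_nhdsGT (hab : a < b) (hf : StrictAntiOn f (Ioc a b))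
    (hl : Tendsto f (𝓝[>] a) (𝓝 l)) : f b < l :=
  lt_of_strictMonoOn_Ioc_of_tendsto_nhdsGT (β := βᵒᵈ) hab hf.dual_right hl

end OneSidedLimit

section Calculus

variable {f f' g : ℝ → ℝ} {s : Set ℝ} {a b l x : ℝ}

theorem strictMonoOn_of_hasDerivAt_pos (hs : Convex ℝ s) (hf : ∀ x ∈ s, HasDerivAt f (f' x) x)
    (hf' : ∀ x ∈ interior s, 0 < f' x) : StrictMonoOn f s :=
  strictMonoOn_of_hasDerivWithinAt_pos hs (HasDerivAt.continuousOn hf)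
    (fun x hx ↦ (hf x (interior_subset hx)).hasDerivWithinAt) hf'

theorem strictAntiOn_of_hasDerivAt_neg (hs : Convex ℝ s) (hf : ∀ x ∈ s, HasDerivAt f (f' x) x)
    (hf' : ∀ x ∈ interior s, f' x < 0) : StrictAntiOn f s :=
  strictAntiOn_of_hasDerivWithinAt_neg hs (HasDerivAt.continuousOn hf)
    (fun x hx ↦ (hf x (interior_subset hx)).hasDerivWithinAt) hf'

theorem lt_of_hasDerivAt_pos_of_tendsto_nhdsGT (hf : ∀ x ∈ Ioo a b, HasDerivAt f (f' x) x)
    (hf' : ∀ x ∈ Ioo a b, 0 < f' x) (hl : Tendsto f (𝓝[>] a) (𝓝 l)) (hx : x ∈ Ioo a b) :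
    l < f x :=
  have hmono := strictMonoOn_of_hasDerivAt_pos (convex_Ioo a b) hf
    fun y hy ↦ hf' y (interior_subset hy)
  lt_of_strictMonoOn_Ioc_of_tendsto_nhdsGT hx.1 (hmono.mono (Ioc_subset_Ioo_right hx.2)) hl

theorem lt_of_hasDerivAt_neg_of_tendsto_nhdsGT (hf : ∀ x ∈ Ioo a b, HasDerivAt f (f' x) x)
    (hf' : ∀ x ∈ Ioo a b, f' x < 0) (hl : Tendsto f (𝓝[>] a) (𝓝 l)) (hx : x ∈ Ioo a b) :
    f x < l :=
  have hanti := strictAntiOn_of_hasDerivAt_neg (convex_Ioo a b) hf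
    fun y hy ↦ hf' y (interior_subset hy)
  lt_of_strictAntiOn_Ioc_of_tendsto_nhdsGT hx.1 (hanti.mono (Ioc_subset_Ioo_right hx.2)) hl

theorem eventually_lt_of_hasDerivAt_pos (hf : ∀ᶠ x in 𝓝[>] a, HasDerivAt f (f' x) x)
    (hf' : ∀ᶠ x in 𝓝[>] a, 0 < f' x) (hl : Tendsto f (𝓝[>] a) (𝓝 l)) :
    ∀ᶠ x in 𝓝[>] a, l < f x := by
  obtain ⟨b, hab, hb⟩ := mem_nhdsGT_iff_exists_Ioo_subset.1 (hf.and hf')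
  filter_upwards [Ioo_mem_nhdsGT hab] with x hx
  exact lt_of_hasDerivAt_pos_of_tendsto_nhdsGT (fun y hy ↦ (hb hy).1) (fun y hy ↦ (hb hy).2) hl hx

theorem tendsto_div_pow_succ_of_hasDerivAt {n : ℕ}
    (hf : ∀ᶠ x in 𝓝[>] (0 : ℝ), HasDerivAt f (f' x) x) (h0 : Tendsto f (𝓝[>] 0) (𝓝 0))
    (hl : Tendsto (fun x ↦ f' x / x ^ n) (𝓝[>] 0) (𝓝 l)) :
    Tendsto (fun x ↦ f x / x ^ (n + 1)) (𝓝[>] 0) (𝓝 (l / (n + 1))) := by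
  have hpow : Tendsto (fun x : ℝ ↦ x ^ (n + 1)) (𝓝[>] 0) (𝓝 0) :=
    ((continuous_pow (n + 1)).tendsto' 0 0 (zero_pow n.succ_ne_zero)).mono_left nhdsWithin_le_nhds
  refine HasDerivAt.lhopital_zero_nhdsGT hf (.of_forall (hasDerivAt_pow (n + 1))) ?_ h0 hpow ?_
  · filter_upwards [self_mem_nhdsWithin] with x hx
    have : x ≠ 0 := ne_of_gt hx
    positivity
  · refine (hl.div_const ((n : ℝ) + 1)).congr fun x ↦ ?_
    rw [div_div, mul_comm (x ^ n), Nat.cast_succ, Nat.add_sub_cancel]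

theorem mul_lt_succ_mul_of_strictAntiOn_div_pow {n : ℕ}
    (hf : ∀ x ∈ Ioo 0 b, HasDerivAt f (f' x) x) (h0 : Tendsto f (𝓝[>] 0) (𝓝 0))
    (hanti : StrictAntiOn (fun x ↦ f' x / x ^ n) (Ioo 0 b)) (hx : x ∈ Ioo 0 b) :
    x * f' x < (n + 1) * f x := by
  set c := f' x / x ^ n with hc
  have hderiv : ∀ y ∈ Ioc 0 x, HasDerivAt (fun y ↦ f y - c * y ^ (n + 1) / (n + 1))
      (f' y - c * y ^ n) y := fun y hy ↦ by
    refine ((hf y ⟨hy.1, hy.2.trans_lt hx.2⟩).fun_sub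
      (((hasDerivAt_pow (n + 1) y).const_mul c).div_const _)).congr_deriv ?_
    rw [Nat.add_sub_cancel, Nat.cast_succ]
    field_simp
  have hpos : ∀ y ∈ interior (Ioc 0 x), 0 < f' y - c * y ^ n := by
    rw [interior_Ioc]
    intro y hy
    rw [sub_pos, ← lt_div_iff₀ (pow_pos hy.1 n)]
    exact hanti ⟨hy.1, hy.2.trans hx.2⟩ hx hy.2
  have hlim : Tendsto (fun y ↦ f y - c * y ^ (n + 1) / (n + 1)) (𝓝[>] 0) (𝓝 0) := by
    have : Continuous fun y : ℝ ↦ c * y ^ (n + 1) / (n + 1) := by fun_prop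
    simpa using h0.sub ((this.tendsto' 0 0 (by simp)).mono_left nhdsWithin_le_nhds)
  have hfx := lt_of_strictMonoOn_Ioc_of_tendsto_nhdsGT hx.1
    (strictMonoOn_of_hasDerivAt_pos (convex_Ioc 0 x) hderiv hpos) hlim
  have hcx : c * x ^ (n + 1) = x * f' x := by
    have := hx.1.ne'
    rw [hc, pow_succ]
    field_simp
  rwa [hcx, sub_pos, div_lt_iff₀' (by positivity)] at hfx

theorem strictAntiOn_div_pow_succ_of_hasDerivAt {n : ℕ}
    (hf : ∀ x ∈ Ioo 0 b, HasDerivAt f (f' x) x) (h0 : Tendsto f (𝓝[>] 0) (𝓝 0))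
    (hanti : StrictAntiOn (fun x ↦ f' x / x ^ n) (Ioo 0 b)) :
    StrictAntiOn (fun x ↦ f x / x ^ (n + 1)) (Ioo 0 b) := by
  refine strictAntiOn_of_hasDerivAt_neg (convex_Ioo 0 b)
    (fun x hx ↦ (hf x hx).div (hasDerivAt_pow (n + 1) x) (pow_ne_zero _ hx.1.ne')) fun x hx ↦ ?_
  rw [interior_Ioo] at hx
  have hx0 : 0 < x := hx.1
  refine div_neg_of_neg_of_pos ?_ (by positivity)
  calc f' x * x ^ (n + 1) - f x * (↑(n + 1) * x ^ (n + 1 - 1))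
      = x ^ n * (x * f' x - (n + 1) * f x) := by rw [Nat.add_sub_cancel, Nat.cast_succ]; ring
    _ < 0 := mul_neg_of_pos_of_neg (by positivity)
      (sub_neg.2 (mul_lt_succ_mul_of_strictAntiOn_div_pow hf h0 hanti hx))

/-- `g` crosses zero at most once on `s`, and only downwards: once it is nonpositive, it stays
negative. -/
def CrossesDownOn (g : ℝ → ℝ) (s : Set ℝ) : Prop :=
  ∀ ⦃u⦄, u ∈ s → ∀ ⦃v⦄, v ∈ s → u < v → g u ≤ 0 → g v < 0

namespace CrossesDownOn

theorem of_strictAntiOn (hg : StrictAntiOn g s) : CrossesDownOn g s :=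
  fun _ hu _ hv huv hgu ↦ (hg hu hv huv).trans_le hgu

theorem mul_left (hg : CrossesDownOn g s) {w : ℝ → ℝ} (hw : ∀ x ∈ s, 0 < w x) :
    CrossesDownOn (fun x ↦ w x * g x) s := fun u hu v hv huv h ↦
  mul_neg_of_pos_of_neg (hw v hv) (hg hu hv huv (nonpos_of_mul_nonpos_right h (hw u hu)))

theorem exp_sub_one (hg : CrossesDownOn g s) : CrossesDownOn (fun x ↦ exp (g x) - 1) s := by
  simpa only [CrossesDownOn, sub_nonpos, sub_neg, exp_le_one_iff, exp_lt_one_iff] using hg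

theorem right_lt_of_nonpos (hg : CrossesDownOn f' (Ioo a b)) (hfc : ContinuousOn f (Ioc a b))
    (hf : ∀ x ∈ Ioo a b, HasDerivAt f (f' x) x) (h0 : Tendsto f (𝓝[>] a) (𝓝 0))
    (hx : x ∈ Ioo a b) (hfx : f x ≤ 0) : f b < f x := by
  have hf'x : f' x ≤ 0 := by
    by_contra! hpos
    have hpos' : ∀ y ∈ interior (Ioc a x), 0 < f' y := by
      rw [interior_Ioc]
      intro y hy
      by_contra! hfy
      exact (hg ⟨hy.1, hy.2.trans hx.2⟩ hx hy.2 hfy).not_gt hpos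
    exact hfx.not_gt <| lt_of_strictMonoOn_Ioc_of_tendsto_nhdsGT hx.1
      (strictMonoOn_of_hasDerivAt_pos (convex_Ioc a x)
        (fun y hy ↦ hf y ⟨hy.1, hy.2.trans_lt hx.2⟩) hpos') h0
  have hanti : StrictAntiOn f (Icc x b) := by
    refine strictAntiOn_of_hasDerivWithinAt_neg (convex_Icc x b) (f' := f')
      (hfc.mono fun y hy ↦ ⟨hx.1.trans_le hy.1, hy.2⟩) ?_ ?_ <;> rw [interior_Icc] <;> intro y hy
    · exact (hf y ⟨hx.1.trans hy.1, hy.2⟩).hasDerivWithinAt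
    · exact hg hx ⟨hx.1.trans hy.1, hy.2⟩ hy.1 hf'x
  exact hanti (left_mem_Icc.2 hx.2.le) (right_mem_Icc.2 hx.2.le) hx.2

theorem of_hasDerivAt (hg : CrossesDownOn f' (Ioo a b))
    (hf : ∀ x ∈ Ioo a b, HasDerivAt f (f' x) x) (h0 : Tendsto f (𝓝[>] a) (𝓝 0)) :
    CrossesDownOn f (Ioo a b) := by
  intro u hu v hv huv hfu
  have hsub : Ioo a v ⊆ Ioo a b := Ioo_subset_Ioo_right hv.2.le
  have hgv : CrossesDownOn f' (Ioo a v) := fun y hy z hz ↦ hg (hsub hy) (hsub hz)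
  exact (hgv.right_lt_of_nonpos
    (HasDerivAt.continuousOn fun y hy ↦ hf y ⟨hy.1, hy.2.trans_lt hv.2⟩)
    (fun y hy ↦ hf y (hsub hy)) h0 ⟨hu.1, huv⟩ hfu).trans_le hfu

end CrossesDownOn

end Calculus

/-- The power mean (Hölder mean) of exponent `r` of two numbers. -/
noncomputable def powMean (r a b : ℝ) : ℝ :=
  if r = 0 then √(a * b) else ((a ^ r + b ^ r) / 2) ^ r⁻¹

namespace powMean

variable {r a b : ℝ}

theorem eq_sqrt (a b : ℝ) : powMean 0 a b = √(a * b) := if_pos rfl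

theorem eq_rpow (hr : r ≠ 0) (a b : ℝ) : powMean r a b = ((a ^ r + b ^ r) / 2) ^ r⁻¹ :=
  if_neg hr

theorem pos (r : ℝ) (ha : 0 < a) (hb : 0 < b) : 0 < powMean r a b := by
  unfold powMean
  split_ifs <;> positivity

theorem self_right (r : ℝ) (ha : 0 ≤ a) : powMean r a a = a := by
  rcases eq_or_ne r 0 with rfl | hr
  · rw [eq_sqrt, Real.sqrt_mul_self ha]
  · rw [eq_rpow hr, add_self_div_two, Real.rpow_rpow_inv ha hr]

theorem one_zero (hr : r ≠ 0) : powMean r 1 0 = 2⁻¹ ^ r⁻¹ := by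
  rw [eq_rpow hr, Real.one_rpow, Real.zero_rpow hr, add_zero, one_div]

theorem continuousAt_right (hr : 0 < r) (a b : ℝ) :
    ContinuousAt (fun b ↦ powMean r a b) b := by
  simp only [eq_rpow hr.ne']
  exact ((continuousAt_const.add (continuousAt_rpow_const b r (.inr hr.le))).div_const 2).rpow_const
    (.inr (inv_nonneg.2 hr.le))

theorem hasDerivAt_log_right (r : ℝ) (ha : 0 < a) (hb : 0 < b) :
    HasDerivAt (fun b ↦ log (powMean r a b)) (b ^ (r - 1) / (a ^ r + b ^ r)) b := by
  rcases eq_or_ne r 0 with rfl | hr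
  · have h : HasDerivAt (fun b ↦ √(a * b)) (a * 1 / (2 * √(a * b))) b :=
      ((hasDerivAt_id' b).const_mul a).sqrt (by positivity)
    simp only [eq_sqrt]
    refine (h.log (by positivity)).congr_deriv ?_
    rw [div_div, mul_assoc, Real.mul_self_sqrt (by positivity), zero_sub, Real.rpow_neg_one,
      Real.rpow_zero, Real.rpow_zero]
    field_simp
    norm_num
  · have hmean : 0 < (a ^ r + b ^ r) / 2 := by positivity
    have h := ((((Real.hasDerivAt_rpow_const (p := r) (.inl hb.ne')).const_add (a ^ r)).div_const
      2).log hmean.ne').const_mul r⁻¹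
    have heq : ∀ᶠ c in 𝓝 b, log (powMean r a c) = r⁻¹ * log ((a ^ r + c ^ r) / 2) := by
      filter_upwards [lt_mem_nhds hb] with c hc
      rw [eq_rpow hr, Real.log_rpow (by positivity)]
    refine (h.congr_of_eventuallyEq heq).congr_deriv ?_
    field_simp

end powMean

section Comparison

variable {c r t u y : ℝ}

/-- The positive root of `h ^ 2 = (1 + c * h) / 2`, in terms of which
`Hfun r t = quadRoot (t ^ r) ^ (1 / r)`. -/
noncomputable def quadRoot (c : ℝ) : ℝ := (√(8 + c ^ 2) + c) / 4

theorem quadRoot_pos (hc : 0 < c) : 0 < quadRoot c := by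
  unfold quadRoot
  positivity

theorem sq_sub_eq_mul_sub_quadRoot (c u : ℝ) :
    u ^ 2 - (1 + c * u) / 2 = (u + (√(8 + c ^ 2) - c) / 4) * (u - quadRoot c) := by
  have := Real.sq_sqrt (show 0 ≤ 8 + c ^ 2 by positivity)
  unfold quadRoot
  linear_combination this / 16

theorem quadRoot_cofactor_pos (c : ℝ) (hu : 0 < u) : 0 < u + (√(8 + c ^ 2) - c) / 4 := by
  have : c ≤ √(8 + c ^ 2) := Real.le_sqrt_of_sq_le (by linarith)
  linarith

theorem quadRoot_lt_iff (c : ℝ) (hu : 0 < u) : quadRoot c < u ↔ (1 + c * u) / 2 < u ^ 2 := by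
  rw [← sub_pos (b := _ / 2), sq_sub_eq_mul_sub_quadRoot,
    mul_pos_iff_of_pos_left (quadRoot_cofactor_pos c hu), sub_pos]

theorem lt_quadRoot_iff (c : ℝ) (hu : 0 < u) : u < quadRoot c ↔ u ^ 2 < (1 + c * u) / 2 := by
  rw [← sub_pos (a := _ / 2), ← neg_sub (u ^ 2), sq_sub_eq_mul_sub_quadRoot, ← mul_neg, neg_sub,
    mul_pos_iff_of_pos_left (quadRoot_cofactor_pos c hu), sub_pos]

theorem Hfun_eq_quadRoot_rpow (hr : r ≠ 0) (ht : 0 ≤ t) : Hfun r t = quadRoot (t ^ r) ^ r⁻¹ := by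
  rw [Hfun, if_neg hr, one_div, mul_comm 2 r, rpow_mul ht, rpow_two, quadRoot]

theorem Hfun_lt_iff_powMean_lt_sq (r : ℝ) (ht : 0 < t) (hy : 0 < y) :
    Hfun r t < y ↔ powMean r 1 (t * y) < y ^ 2 := by
  rcases lt_trichotomy r 0 with hr | rfl | hr
  · rw [Hfun_eq_quadRoot_rpow hr.ne ht.le,
      rpow_inv_lt_iff_of_neg (quadRoot_pos (by positivity)) hy hr,
      lt_quadRoot_iff _ (by positivity), rpow_pow_comm hy.le, ← mul_rpow ht.le hy.le,
      powMean.eq_rpow hr.ne, one_rpow, rpow_inv_lt_iff_of_neg (by positivity) (by positivity) hr]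
  · rw [Hfun, if_pos rfl, one_div, rpow_inv_lt_iff_of_pos ht.le hy.le three_pos, rpow_ofNat,
      powMean.eq_sqrt, one_mul, Real.sqrt_lt' (by positivity), ← mul_lt_mul_iff_left₀ hy]
    ring_nf
  · rw [Hfun_eq_quadRoot_rpow hr.ne' ht.le,
      rpow_inv_lt_iff_of_pos (quadRoot_pos (by positivity)).le hy.le hr,
      quadRoot_lt_iff _ (by positivity), rpow_pow_comm hy.le, ← mul_rpow ht.le hy.le,
      powMean.eq_rpow hr.ne', one_rpow,
      rpow_inv_lt_iff_of_pos (by positivity) (by positivity) hr]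

theorem lt_Hfun_iff_sq_lt_powMean (r : ℝ) (ht : 0 < t) (hy : 0 < y) :
    y < Hfun r t ↔ y ^ 2 < powMean r 1 (t * y) := by
  rcases lt_trichotomy r 0 with hr | rfl | hr
  · rw [Hfun_eq_quadRoot_rpow hr.ne ht.le,
      lt_rpow_inv_iff_of_neg hy (quadRoot_pos (by positivity)) hr,
      quadRoot_lt_iff _ (by positivity), rpow_pow_comm hy.le, ← mul_rpow ht.le hy.le,
      powMean.eq_rpow hr.ne, one_rpow, lt_rpow_inv_iff_of_neg (by positivity) (by positivity) hr]
  · rw [Hfun, if_pos rfl, one_div, lt_rpow_inv_iff_of_pos hy.le ht.le three_pos, rpow_ofNat,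
      powMean.eq_sqrt, one_mul, Real.lt_sqrt (by positivity), ← mul_lt_mul_iff_left₀ hy]
    ring_nf
  · rw [Hfun_eq_quadRoot_rpow hr.ne' ht.le,
      lt_rpow_inv_iff_of_pos hy.le (quadRoot_pos (by positivity)).le hr,
      lt_quadRoot_iff _ (by positivity), rpow_pow_comm hy.le, ← mul_rpow ht.le hy.le,
      powMean.eq_rpow hr.ne', one_rpow,
      lt_rpow_inv_iff_of_pos (by positivity) (by positivity) hr]

end Comparison

/-- `f` vanishes to order `n` at `0⁺` with leading coefficient `l`, is positive on `(0, b)`, and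
`f x / x ^ n` is strictly decreasing there. -/
structure HasDecreasingQuotient (f : ℝ → ℝ) (n : ℕ) (l b : ℝ) : Prop where
  pos : ∀ x ∈ Ioo 0 b, 0 < f x
  strictAntiOn : StrictAntiOn (fun x ↦ f x / x ^ n) (Ioo 0 b)
  tendsto : Tendsto (fun x ↦ f x / x ^ n) (𝓝[>] 0) (𝓝 l)

theorem HasDecreasingQuotient.of_hasDerivAt {f f' : ℝ → ℝ} {n : ℕ} {l b : ℝ}
    (hf' : HasDecreasingQuotient f' n l b) (hf : ∀ x, HasDerivAt f (f' x) x) (h0 : f 0 = 0) :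
    HasDecreasingQuotient f (n + 1) (l / (n + 1)) b := by
  have hlim : Tendsto f (𝓝[>] 0) (𝓝 0) := by
    simpa only [ContinuousWithinAt, h0] using (hf 0).continuousAt.continuousWithinAt (s := Ioi 0)
  exact
    { pos x hx := lt_of_hasDerivAt_pos_of_tendsto_nhdsGT (fun x _ ↦ hf x) hf'.pos hlim hx
      strictAntiOn :=
        strictAntiOn_div_pow_succ_of_hasDerivAt (fun x _ ↦ hf x) hlim hf'.strictAntiOn
      tendsto := tendsto_div_pow_succ_of_hasDerivAt (.of_forall hf) hlim hf'.tendsto }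

section CusaHuygens

theorem tendsto_sin_div_self_nhdsGT : Tendsto (fun x : ℝ ↦ sin x / x) (𝓝[>] 0) (𝓝 1) := by
  refine ((continuous_sinc.tendsto' 0 1 sinc_zero).mono_left nhdsWithin_le_nhds).congr' ?_
  filter_upwards [self_mem_nhdsWithin] with x hx
  exact sinc_of_ne_zero (ne_of_gt hx)

theorem hasDecreasingQuotient_mul_sin :
    HasDecreasingQuotient (fun x ↦ x * sin x) 2 1 π := by
  have heq (x : ℝ) : x * sin x / x ^ 2 = sin x / x := by
    rcases eq_or_ne x 0 with rfl | hx
    · simp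
    · field_simp
  refine ⟨fun x hx ↦ mul_pos hx.1 (sin_pos_of_mem_Ioo hx), ?_, ?_⟩ <;> simp only [heq]
  · have hcos : StrictAntiOn (fun x : ℝ ↦ cos x / x ^ 0) (Ioo 0 π) := by
      simpa only [pow_zero, div_one] using strictAntiOn_cos.mono Ioo_subset_Icc_self
    have hsin : Tendsto sin (𝓝[>] 0) (𝓝 0) :=
      (continuous_sin.tendsto' 0 0 sin_zero).mono_left nhdsWithin_le_nhds
    simpa only [zero_add, pow_one] using
      strictAntiOn_div_pow_succ_of_hasDerivAt (fun x _ ↦ hasDerivAt_sin x) hsin hcos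
  · exact tendsto_sin_div_self_nhdsGT

theorem hasDerivAt_sin_sub_mul_cos (x : ℝ) :
    HasDerivAt (fun x ↦ sin x - x * cos x) (x * sin x) x :=
  ((hasDerivAt_sin x).sub ((hasDerivAt_id' x).mul (hasDerivAt_cos x))).congr_deriv (by ring)

theorem hasDecreasingQuotient_sin_sub_mul_cos :
    HasDecreasingQuotient (fun x ↦ sin x - x * cos x) 3 (1 / 3) π := by
  convert hasDecreasingQuotient_mul_sin.of_hasDerivAt hasDerivAt_sin_sub_mul_cos (by simp) using 1
  norm_num

theorem hasDecreasingQuotient_two_sub_two_mul_cos_sub_mul_sin :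
    HasDecreasingQuotient (fun x ↦ 2 - 2 * cos x - x * sin x) 4 (1 / 12) π := by
  have hderiv (x : ℝ) :
      HasDerivAt (fun x ↦ 2 - 2 * cos x - x * sin x) (sin x - x * cos x) x :=
    ((((hasDerivAt_cos x).const_mul 2).const_sub 2).sub
      ((hasDerivAt_id' x).mul (hasDerivAt_sin x))).congr_deriv (by ring)
  convert hasDecreasingQuotient_sin_sub_mul_cos.of_hasDerivAt hderiv (by simp) using 1
  norm_num

/-- The Cusa–Huygens inequality `3 * sin x < x * (2 + cos x)` asserts that this defect is
positive. -/
noncomputable def cusaDefect (x : ℝ) : ℝ := x * (2 + cos x) - 3 * sin x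

/-- The antiderivative of `cusaDefect` that vanishes at `0`. -/
noncomputable def cusaPrimitive (x : ℝ) : ℝ := x ^ 2 + x * sin x + 4 * cos x - 4

theorem hasDecreasingQuotient_cusaDefect : HasDecreasingQuotient cusaDefect 5 (1 / 60) π := by
  have hderiv (x : ℝ) : HasDerivAt cusaDefect (2 - 2 * cos x - x * sin x) x :=
    (((hasDerivAt_id' x).mul ((hasDerivAt_cos x).const_add 2)).sub
      ((hasDerivAt_sin x).const_mul 3)).congr_deriv (by ring)
  convert hasDecreasingQuotient_two_sub_two_mul_cos_sub_mul_sin.of_hasDerivAt hderiv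
    (by simp [cusaDefect]) using 1
  norm_num

theorem hasDecreasingQuotient_cusaPrimitive :
    HasDecreasingQuotient cusaPrimitive 6 (1 / 360) π := by
  have hderiv (x : ℝ) : HasDerivAt cusaPrimitive (cusaDefect x) x :=
    ((((hasDerivAt_pow 2 x).add ((hasDerivAt_id' x).mul (hasDerivAt_sin x))).add
      ((hasDerivAt_cos x).const_mul 4)).sub_const 4).congr_deriv (by simp only [cusaDefect]; ring)
  convert hasDecreasingQuotient_cusaDefect.of_hasDerivAt hderiv (by simp [cusaPrimitive]) using 1
  norm_num

end CusaHuygens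

section Ratios

variable {x : ℝ}

theorem Ioo_pi_div_two_subset_Ioo_pi : Ioo 0 (π / 2) ⊆ Ioo 0 π :=
  Ioo_subset_Ioo_right (half_le_self pi_pos.le)

theorem two_mul_mem_Ioo_pi (hx : x ∈ Ioo 0 (π / 2)) : 2 * x ∈ Ioo 0 π :=
  ⟨mul_pos two_pos hx.1, (lt_div_iff₀' two_pos).1 hx.2⟩

theorem hasDerivAt_sub_sin_mul_cos (x : ℝ) :
    HasDerivAt (fun x ↦ x - sin x * cos x) (2 * sin x ^ 2) x :=
  ((hasDerivAt_id' x).sub ((hasDerivAt_sin x).mul (hasDerivAt_cos x))).congr_deriv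
    (by linear_combination -sin_sq_add_cos_sq x)

theorem tendsto_sub_sin_mul_cos_div_pow_three :
    Tendsto (fun x : ℝ ↦ (x - sin x * cos x) / x ^ 3) (𝓝[>] 0) (𝓝 (2 / 3)) := by
  have hlim : Tendsto (fun x ↦ 2 * sin x ^ 2 / x ^ 2) (𝓝[>] 0) (𝓝 2) := by
    simpa [div_pow, mul_div_assoc] using (tendsto_sin_div_self_nhdsGT.pow 2).const_mul 2
  have h0 : Tendsto (fun x ↦ x - sin x * cos x) (𝓝[>] 0) (𝓝 0) :=
    (Continuous.tendsto' (by fun_prop) 0 0 (by simp)).mono_left nhdsWithin_le_nhds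
  convert tendsto_div_pow_succ_of_hasDerivAt (.of_forall hasDerivAt_sub_sin_mul_cos) h0 hlim using 2
  norm_num

theorem sub_sin_mul_cos_pos (hx : 0 < x) : 0 < x - sin x * cos x := by
  have := sin_lt (mul_pos two_pos hx)
  rw [sin_two_mul] at this
  linarith

theorem sin_sub_mul_cos_pos (hx : x ∈ Ioo 0 π) : 0 < sin x - x * cos x :=
  hasDecreasingQuotient_sin_sub_mul_cos.pos x hx

theorem cos_pos_of_mem_Ioo_pi_div_two (hx : x ∈ Ioo 0 (π / 2)) : 0 < cos x :=
  cos_pos_of_mem_Ioo ⟨by linarith [hx.1, pi_pos], hx.2⟩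

/-- The ratio `q` for which `log (sinc x)` has derivative `-q x * tan x`; the Cusa–Huygens
inequality at `2 * x` says that `q x < 1 / 3`. -/
noncomputable def cusaRatio (x : ℝ) : ℝ := cos x * (sin x - x * cos x) / (x * sin x ^ 2)

theorem cusaRatio_pos (hx : x ∈ Ioo 0 (π / 2)) : 0 < cusaRatio x := by
  have hx0 := hx.1
  have hcos := cos_pos_of_mem_Ioo_pi_div_two hx
  have hsin := sin_pos_of_mem_Ioo (Ioo_pi_div_two_subset_Ioo_pi hx)
  have hU := sin_sub_mul_cos_pos (Ioo_pi_div_two_subset_Ioo_pi hx)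
  unfold cusaRatio
  positivity

theorem one_sub_cusaRatio (hx : x ∈ Ioo 0 (π / 2)) :
    1 - cusaRatio x = (x - sin x * cos x) / (x * sin x ^ 2) := by
  have hx0 := hx.1.ne'
  have hsin := (sin_pos_of_mem_Ioo (Ioo_pi_div_two_subset_Ioo_pi hx)).ne'
  rw [cusaRatio]
  field_simp
  linear_combination x * sin_sq_add_cos_sq x

theorem cusaRatio_lt_one (hx : x ∈ Ioo 0 (π / 2)) : cusaRatio x < 1 := by
  rw [← sub_pos, one_sub_cusaRatio hx]
  have hsin := sin_pos_of_mem_Ioo (Ioo_pi_div_two_subset_Ioo_pi hx)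
  exact div_pos (sub_sin_mul_cos_pos hx.1) (mul_pos hx.1 (pow_pos hsin 2))

theorem tendsto_cusaRatio : Tendsto cusaRatio (𝓝[>] 0) (𝓝 (1 / 3)) := by
  have h := (tendsto_sub_sin_mul_cos_div_pow_three.div (tendsto_sin_div_self_nhdsGT.pow 2)
    (by norm_num)).const_sub 1
  rw [show (1 - 2 / 3 / 1 ^ 2 : ℝ) = 1 / 3 by norm_num] at h
  refine h.congr' ?_
  filter_upwards [Ioo_mem_nhdsGT pi_div_two_pos] with x hx
  have hx0 := hx.1.ne'
  have hsin := (sin_pos_of_mem_Ioo (Ioo_pi_div_two_subset_Ioo_pi hx)).ne'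
  rw [← sub_sub_cancel 1 (cusaRatio x), one_sub_cusaRatio hx, Pi.div_apply]
  field_simp

theorem cusaDefect_two_mul (x : ℝ) :
    cusaDefect (2 * x) = 2 * (x * sin x ^ 2 - 3 * ((sin x - x * cos x) * cos x)) := by
  rw [cusaDefect, sin_two_mul, cos_two_mul]
  linear_combination -2 * x * sin_sq_add_cos_sq x

theorem cusaPrimitive_two_mul (x : ℝ) :
    cusaPrimitive (2 * x) = 4 * (x ^ 2 + x * sin x * cos x - 2 * sin x ^ 2) := by
  rw [cusaPrimitive, sin_two_mul, cos_two_mul]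
  linear_combination 8 * sin_sq_add_cos_sq x

/-- The denominator of `1 - wilkerRatio x`, normalised to have a finite nonzero limit at `0`. -/
noncomputable def wilkerDenom (x : ℝ) : ℝ :=
  (sin x - x * cos x) * (x - sin x * cos x) / (cos x * x ^ 6)

/-- The ratio for which `cusaRatio / (1 - cusaRatio)` has logarithmic derivative
`-wilkerRatio x * tan x`; positivity of its numerator is Wilker's inequality
`2 < (sin x / x) ^ 2 + tan x / x`. -/
noncomputable def wilkerRatio (x : ℝ) : ℝ :=
  (x * sin x + cos x * sin x ^ 2 - 2 * x ^ 2 * cos x) /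
    ((sin x - x * cos x) * (x - sin x * cos x))

theorem wilkerDenom_pos (hx : x ∈ Ioo 0 (π / 2)) : 0 < wilkerDenom x := by
  have hx0 := hx.1
  have hcos := cos_pos_of_mem_Ioo_pi_div_two hx
  have hU := sin_sub_mul_cos_pos (Ioo_pi_div_two_subset_Ioo_pi hx)
  have hV := sub_sin_mul_cos_pos hx.1
  unfold wilkerDenom
  positivity

theorem hasDerivAt_wilkerDenom (hx : x ∈ Ioo 0 (π / 2)) :
    HasDerivAt wilkerDenom ((x * sin x ^ 2 - 2 * ((sin x - x * cos x) * cos x)) *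
      (x * sin x ^ 2 - 3 * ((sin x - x * cos x) * cos x)) / (cos x ^ 2 * x ^ 7)) x := by
  have hx0 := hx.1.ne'
  have hcos := (cos_pos_of_mem_Ioo_pi_div_two hx).ne'
  refine (((hasDerivAt_sin_sub_mul_cos x).mul (hasDerivAt_sub_sin_mul_cos x)).div
    ((hasDerivAt_cos x).mul (hasDerivAt_pow 6 x))
    (mul_ne_zero hcos (pow_ne_zero 6 hx0))).congr_deriv ?_
  simp only [Pi.mul_apply]
  field_simp
  linear_combination x ^ 5 * (6 * x * sin x * cos x - x ^ 2 * (sin x ^ 2 + 6 * cos x ^ 2)) *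
    sin_sq_add_cos_sq x

theorem strictMonoOn_wilkerDenom : StrictMonoOn wilkerDenom (Ioo 0 (π / 2)) := by
  refine strictMonoOn_of_hasDerivAt_pos (convex_Ioo _ _) (fun x hx ↦ hasDerivAt_wilkerDenom hx)
    fun x hx ↦ ?_
  rw [interior_Ioo] at hx
  have hx0 := hx.1
  have hcos := cos_pos_of_mem_Ioo_pi_div_two hx
  have hU := sin_sub_mul_cos_pos (Ioo_pi_div_two_subset_Ioo_pi hx)
  have hcusa := hasDecreasingQuotient_cusaDefect.pos _ (two_mul_mem_Ioo_pi hx)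
  rw [cusaDefect_two_mul] at hcusa
  have hUcos := mul_pos hU hcos
  exact div_pos (mul_pos (by linarith) (by linarith)) (by positivity)

theorem tendsto_wilkerDenom : Tendsto wilkerDenom (𝓝[>] 0) (𝓝 (2 / 9)) := by
  have hcos : Tendsto cos (𝓝[>] 0) (𝓝 1) :=
    (continuous_cos.tendsto' 0 1 cos_zero).mono_left nhdsWithin_le_nhds
  have h := (hasDecreasingQuotient_sin_sub_mul_cos.tendsto.mul
    tendsto_sub_sin_mul_cos_div_pow_three).div hcos one_ne_zero
  rw [show (1 / 3 * (2 / 3) / 1 : ℝ) = 2 / 9 by norm_num] at h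
  refine h.congr fun x ↦ ?_
  rw [Pi.div_apply, wilkerDenom, div_mul_div_comm, div_div, ← pow_add, mul_comm (cos x)]

theorem one_sub_wilkerRatio (hx : x ∈ Ioo 0 (π / 2)) :
    1 - wilkerRatio x = 16 * (cusaPrimitive (2 * x) / (2 * x) ^ 6 / wilkerDenom x) := by
  have hx0 := hx.1.ne'
  have hU := (sin_sub_mul_cos_pos (Ioo_pi_div_two_subset_Ioo_pi hx)).ne'
  have hV := (sub_sin_mul_cos_pos hx.1).ne'
  rw [cusaPrimitive_two_mul, wilkerDenom, wilkerRatio]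
  field_simp
  ring

theorem strictMonoOn_wilkerRatio : StrictMonoOn wilkerRatio (Ioo 0 (π / 2)) := by
  intro x hx y hy hxy
  have hx2 := two_mul_mem_Ioo_pi hx
  have hy2 := two_mul_mem_Ioo_pi hy
  have hM := hasDecreasingQuotient_cusaPrimitive.strictAntiOn hx2 hy2 (by linarith)
  have hMy := div_pos (hasDecreasingQuotient_cusaPrimitive.pos _ hy2) (pow_pos hy2.1 6)
  have hlt := div_lt_div₀ hM (strictMonoOn_wilkerDenom hx hy hxy).le (hMy.trans hM).le
    (wilkerDenom_pos hx)
  rw [← sub_lt_sub_iff_left 1, one_sub_wilkerRatio hx, one_sub_wilkerRatio hy]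
  exact mul_lt_mul_of_pos_left hlt (by norm_num)

theorem tendsto_wilkerRatio : Tendsto wilkerRatio (𝓝[>] 0) (𝓝 (4 / 5)) := by
  have htwo : Tendsto (fun x : ℝ ↦ 2 * x) (𝓝[>] 0) (𝓝[>] 0) :=
    tendsto_nhdsWithin_iff.2 ⟨((continuous_const_mul 2).tendsto' 0 0 (mul_zero 2)).mono_left
      nhdsWithin_le_nhds, eventually_mem_nhdsWithin.mono fun x hx ↦ mul_pos two_pos hx.out⟩
  have h := (((hasDecreasingQuotient_cusaPrimitive.tendsto.comp htwo).div tendsto_wilkerDenom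
    (by norm_num)).const_mul 16).const_sub 1
  rw [show (1 - 16 * (1 / 360 / (2 / 9)) : ℝ) = 4 / 5 by norm_num] at h
  refine h.congr' ?_
  filter_upwards [Ioo_mem_nhdsGT pi_div_two_pos] with x hx
  simp only [Pi.div_apply, Function.comp_apply, ← one_sub_wilkerRatio hx, sub_sub_cancel]

theorem four_fifths_lt_wilkerRatio (hx : x ∈ Ioo 0 (π / 2)) : 4 / 5 < wilkerRatio x :=
  lt_of_strictMonoOn_Ioc_of_tendsto_nhdsGT hx.1
    (strictMonoOn_wilkerRatio.mono (Ioc_subset_Ioo_right hx.2)) tendsto_wilkerRatio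

theorem hasDerivAt_cusaRatio (hx : x ∈ Ioo 0 (π / 2)) :
    HasDerivAt cusaRatio
      (-(wilkerRatio x * tan x * (cusaRatio x * (1 - cusaRatio x)))) x := by
  have hx0 := hx.1.ne'
  have hcos := (cos_pos_of_mem_Ioo_pi_div_two hx).ne'
  have hsin := (sin_pos_of_mem_Ioo (Ioo_pi_div_two_subset_Ioo_pi hx)).ne'
  have hU := (sin_sub_mul_cos_pos (Ioo_pi_div_two_subset_Ioo_pi hx)).ne'
  have hV := (sub_sin_mul_cos_pos hx.1).ne'
  refine (((hasDerivAt_cos x).mul (hasDerivAt_sin_sub_mul_cos x)).div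
    ((hasDerivAt_id' x).mul ((hasDerivAt_sin x).pow 2)) (by simp [hx0, hsin])).congr_deriv ?_
  rw [one_sub_cusaRatio hx, cusaRatio, wilkerRatio, tan_eq_sin_div_cos]
  simp only [Pi.mul_apply, Pi.pow_apply]
  field_simp
  linear_combination (2 * x ^ 2 * sin x * cos x - x * sin x ^ 2) * sin_sq_add_cos_sq x

theorem strictAntiOn_cusaRatio : StrictAntiOn cusaRatio (Ioo 0 (π / 2)) := by
  refine strictAntiOn_of_hasDerivAt_neg (convex_Ioo _ _) (fun x hx ↦ hasDerivAt_cusaRatio hx)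
    fun x hx ↦ ?_
  rw [interior_Ioo] at hx
  have hE : 0 < wilkerRatio x := by linarith [four_fifths_lt_wilkerRatio hx]
  have htan := tan_pos_of_pos_of_lt_pi_div_two hx.1 hx.2
  have hq := cusaRatio_pos hx
  have hq1 := sub_pos.2 (cusaRatio_lt_one hx)
  exact neg_neg_of_pos (by positivity)

/-- The exponent at which the auxiliary function `logOdds r` is stationary at `x`. -/
noncomputable def criticalExponent (x : ℝ) : ℝ := wilkerRatio x / (1 + cusaRatio x)

theorem strictMonoOn_criticalExponent : StrictMonoOn criticalExponent (Ioo 0 (π / 2)) :=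
  fun x hx y hy hxy ↦ div_lt_div₀ (strictMonoOn_wilkerRatio hx hy hxy)
    (add_le_add_right (strictAntiOn_cusaRatio hx hy hxy).le 1)
    (by linarith [four_fifths_lt_wilkerRatio hy]) (by linarith [cusaRatio_pos hy])

theorem tendsto_criticalExponent : Tendsto criticalExponent (𝓝[>] 0) (𝓝 (3 / 5)) := by
  have h := tendsto_wilkerRatio.div (tendsto_cusaRatio.const_add 1) (by norm_num)
  rwa [show (4 / 5 / (1 + 1 / 3) : ℝ) = 3 / 5 by norm_num] at h

theorem three_fifths_lt_criticalExponent (hx : x ∈ Ioo 0 (π / 2)) : 3 / 5 < criticalExponent x :=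
  lt_of_strictMonoOn_Ioc_of_tendsto_nhdsGT hx.1
    (strictMonoOn_criticalExponent.mono (Ioc_subset_Ioo_right hx.2)) tendsto_criticalExponent

end Ratios

section Gap

variable {r x : ℝ}

theorem sinc_pos_of_mem_Ioo (hx : x ∈ Ioo 0 π) : 0 < sinc x := by
  rw [sinc_of_ne_zero hx.1.ne']
  exact div_pos (sin_pos_of_mem_Ioo hx) hx.1

theorem cos_mul_sinc_pos (hx : x ∈ Ioo 0 (π / 2)) : 0 < cos x * sinc x :=
  mul_pos (cos_pos_of_mem_Ioo_pi_div_two hx)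
    (sinc_pos_of_mem_Ioo (Ioo_pi_div_two_subset_Ioo_pi hx))

theorem hasDerivAt_sinc (hx : x ≠ 0) : HasDerivAt sinc ((cos x - sinc x) / x) x := by
  have heq : ∀ᶠ y in 𝓝 x, sinc y = sin y / y := by
    filter_upwards [isOpen_ne.mem_nhds hx] with y hy using sinc_of_ne_zero hy
  refine (((hasDerivAt_sin x).fun_div (hasDerivAt_id' x) hx).congr_of_eventuallyEq
    heq).congr_deriv ?_
  rw [sinc_of_ne_zero hx]
  field_simp

theorem hasDerivAt_sinc_cusaRatio (hx : x ∈ Ioo 0 (π / 2)) :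
    HasDerivAt sinc (-(cusaRatio x * tan x) * sinc x) x := by
  have hx0 := hx.1.ne'
  have hcos := (cos_pos_of_mem_Ioo_pi_div_two hx).ne'
  have hsin := (sin_pos_of_mem_Ioo (Ioo_pi_div_two_subset_Ioo_pi hx)).ne'
  refine (hasDerivAt_sinc hx0).congr_deriv ?_
  rw [cusaRatio, tan_eq_sin_div_cos, sinc_of_ne_zero hx0]
  field_simp
  ring

theorem hasDerivAt_cos_mul_sinc (hx : x ∈ Ioo 0 (π / 2)) :
    HasDerivAt (fun x ↦ cos x * sinc x)
      (-((1 + cusaRatio x) * tan x) * (cos x * sinc x)) x := by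
  refine ((hasDerivAt_cos x).mul (hasDerivAt_sinc_cusaRatio hx)).congr_deriv ?_
  rw [← tan_mul_cos (cos_pos_of_mem_Ioo_pi_div_two hx).ne']
  ring

theorem hasDerivAt_log_sinc (hx : x ∈ Ioo 0 (π / 2)) :
    HasDerivAt (fun x ↦ log (sinc x)) (-(cusaRatio x * tan x)) x :=
  have hsinc := (sinc_pos_of_mem_Ioo (Ioo_pi_div_two_subset_Ioo_pi hx)).ne'
  ((hasDerivAt_sinc_cusaRatio hx).log hsinc).congr_deriv (mul_div_cancel_right₀ _ hsinc)

theorem hasDerivAt_log_cos_mul_sinc (hx : x ∈ Ioo 0 (π / 2)) :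
    HasDerivAt (fun x ↦ log (cos x * sinc x)) (-((1 + cusaRatio x) * tan x)) x :=
  have hB := (cos_mul_sinc_pos hx).ne'
  ((hasDerivAt_cos_mul_sinc hx).log hB).congr_deriv (mul_div_cancel_right₀ _ hB)

theorem tendsto_cos_mul_sinc : Tendsto (fun x ↦ cos x * sinc x) (𝓝 0) (𝓝 1) :=
  (continuous_cos.mul continuous_sinc).tendsto' 0 1 (by simp)

/-- The logarithm of the ratio of the two terms `2 * q` and `(1 - q) * B ^ r` that compete in the
derivative of `powMeanGap r`, where `q = cusaRatio x` and `B = cos x * sinc x`. -/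
noncomputable def logOdds (r x : ℝ) : ℝ :=
  log (2 * cusaRatio x / (1 - cusaRatio x)) - r * log (cos x * sinc x)

theorem hasDerivAt_logOdds (r : ℝ) (hx : x ∈ Ioo 0 (π / 2)) :
    HasDerivAt (logOdds r) ((1 + cusaRatio x) * tan x * (r - criticalExponent x)) x := by
  have hq := cusaRatio_pos hx
  have hq1 := sub_pos.2 (cusaRatio_lt_one hx)
  have hodds := ((hasDerivAt_cusaRatio hx).const_mul 2).fun_div
    ((hasDerivAt_cusaRatio hx).const_sub 1) hq1.ne'
  refine ((hodds.log (by positivity)).sub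
    ((hasDerivAt_log_cos_mul_sinc hx).const_mul r)).congr_deriv ?_
  rw [criticalExponent]
  field_simp
  ring

theorem tendsto_logOdds (r : ℝ) : Tendsto (logOdds r) (𝓝[>] 0) (𝓝 0) := by
  have hodds := ((tendsto_cusaRatio.const_mul 2).div (tendsto_cusaRatio.const_sub 1)
    (by norm_num)).log (by norm_num)
  have h := hodds.sub (((tendsto_cos_mul_sinc.mono_left nhdsWithin_le_nhds).log
    one_ne_zero).const_mul r)
  rwa [show (2 * (1 / 3) / (1 - 1 / 3) : ℝ) = 1 by norm_num, log_one, mul_zero, sub_zero] at h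

/-- The logarithmic gap between `powMean r 1 (cos x * sinc x)` and `sinc x ^ 2`; its sign compares
`Hfun r (cos x)` with `sin x / x`. -/
noncomputable def powMeanGap (r x : ℝ) : ℝ :=
  log (powMean r 1 (cos x * sinc x)) - 2 * log (sinc x)

theorem Hfun_cos_lt_iff (r : ℝ) (hx : x ∈ Ioo 0 (π / 2)) :
    Hfun r (cos x) < sin x / x ↔ powMeanGap r x < 0 := by
  have hsinc := sinc_pos_of_mem_Ioo (Ioo_pi_div_two_subset_Ioo_pi hx)
  have hmean := powMean.pos r one_pos (cos_mul_sinc_pos hx)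
  rw [← sinc_of_ne_zero hx.1.ne',
    Hfun_lt_iff_powMean_lt_sq r (cos_pos_of_mem_Ioo_pi_div_two hx) hsinc,
    ← log_lt_log_iff hmean (by positivity), log_pow, powMeanGap, sub_neg, Nat.cast_ofNat]

theorem lt_Hfun_cos_iff (r : ℝ) (hx : x ∈ Ioo 0 (π / 2)) :
    sin x / x < Hfun r (cos x) ↔ 0 < powMeanGap r x := by
  have hsinc := sinc_pos_of_mem_Ioo (Ioo_pi_div_two_subset_Ioo_pi hx)
  have hmean := powMean.pos r one_pos (cos_mul_sinc_pos hx)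
  rw [← sinc_of_ne_zero hx.1.ne',
    lt_Hfun_iff_sq_lt_powMean r (cos_pos_of_mem_Ioo_pi_div_two hx) hsinc,
    ← log_lt_log_iff (by positivity) hmean, log_pow, powMeanGap, sub_pos, Nat.cast_ofNat]

theorem powMeanGap_pi_div_two (hr : r ≠ 0) :
    powMeanGap r (π / 2) = 2 * (log π - log 2) - log 2 / r := by
  rw [powMeanGap, cos_pi_div_two, zero_mul, powMean.one_zero hr, log_rpow (by norm_num), log_inv,
    sinc_of_ne_zero pi_div_two_pos.ne', sin_pi_div_two, one_div_div,
    log_div two_ne_zero pi_ne_zero]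
  ring

theorem continuousAt_powMeanGap_pi_div_two (hr : 0 < r) :
    ContinuousAt (powMeanGap r) (π / 2) := by
  have hcos : ContinuousAt (fun x ↦ cos x * sinc x) (π / 2) :=
    (continuous_cos.mul continuous_sinc).continuousAt
  have hmean : ContinuousAt (fun x ↦ powMean r 1 (cos x * sinc x)) (π / 2) :=
    (powMean.continuousAt_right hr 1 _).comp hcos
  have hsinc := sinc_pos_of_mem_Ioo ⟨pi_div_two_pos, div_two_lt_of_pos pi_pos⟩
  refine (hmean.log ?_).sub ((continuous_sinc.continuousAt.log hsinc.ne').const_mul 2)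
  rw [cos_pi_div_two, zero_mul, powMean.one_zero hr.ne']
  positivity

theorem tendsto_powMeanGap (r : ℝ) : Tendsto (powMeanGap r) (𝓝[>] 0) (𝓝 0) := by
  have hmean : Tendsto (fun b ↦ log (powMean r 1 b)) (𝓝 1) (𝓝 0) := by
    simpa [ContinuousAt, powMean.self_right] using
      (powMean.hasDerivAt_log_right r one_pos one_pos).continuousAt
  have hsinc := (continuous_sinc.tendsto' 0 1 sinc_zero).log one_ne_zero
  have h := (hmean.comp tendsto_cos_mul_sinc).sub (hsinc.const_mul 2)
  rw [log_one, mul_zero, sub_zero] at h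
  exact h.mono_left nhdsWithin_le_nhds

/-- The positive factor in the derivative of `powMeanGap r`. -/
noncomputable def gapWeight (r x : ℝ) : ℝ :=
  tan x * (1 - cusaRatio x) * ((cos x * sinc x) ^ r / (1 + (cos x * sinc x) ^ r))

theorem gapWeight_pos (r : ℝ) (hx : x ∈ Ioo 0 (π / 2)) : 0 < gapWeight r x := by
  have hB := cos_mul_sinc_pos hx
  have htan := tan_pos_of_pos_of_lt_pi_div_two hx.1 hx.2
  have hq := sub_pos.2 (cusaRatio_lt_one hx)
  unfold gapWeight
  positivity

theorem exp_logOdds (r : ℝ) (hx : x ∈ Ioo 0 (π / 2)) :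
    exp (logOdds r x) = 2 * cusaRatio x / (1 - cusaRatio x) / (cos x * sinc x) ^ r := by
  have hq := cusaRatio_pos hx
  have hq1 := sub_pos.2 (cusaRatio_lt_one hx)
  rw [logOdds, exp_sub, exp_log (by positivity), mul_comm r, rpow_def_of_pos (cos_mul_sinc_pos hx)]

theorem hasDerivAt_powMeanGap (r : ℝ) (hx : x ∈ Ioo 0 (π / 2)) :
    HasDerivAt (powMeanGap r) (gapWeight r x * (exp (logOdds r x) - 1)) x := by
  have hB := cos_mul_sinc_pos hx
  have hq1 := sub_pos.2 (cusaRatio_lt_one hx)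
  refine (((powMean.hasDerivAt_log_right r one_pos hB).comp x (hasDerivAt_cos_mul_sinc hx)).sub
    ((hasDerivAt_log_sinc hx).const_mul 2)).congr_deriv ?_
  rw [exp_logOdds r hx, gapWeight, rpow_sub_one hB.ne', one_rpow]
  set B := cos x * sinc x
  field_simp
  ring

theorem one_add_cusaRatio_mul_tan_pos (hx : x ∈ Ioo 0 (π / 2)) :
    0 < (1 + cusaRatio x) * tan x :=
  mul_pos (add_pos one_pos (cusaRatio_pos hx)) (tan_pos_of_pos_of_lt_pi_div_two hx.1 hx.2)

theorem powMeanGap_neg (hr : r ≤ 3 / 5) (hx : x ∈ Ioo 0 (π / 2)) : powMeanGap r x < 0 := by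
  have hodds : ∀ y ∈ Ioo 0 (π / 2), logOdds r y < 0 := fun y hy ↦
    lt_of_hasDerivAt_neg_of_tendsto_nhdsGT (fun z hz ↦ hasDerivAt_logOdds r hz)
      (fun z hz ↦ mul_neg_of_pos_of_neg (one_add_cusaRatio_mul_tan_pos hz)
        (sub_neg.2 (hr.trans_lt (three_fifths_lt_criticalExponent hz)))) (tendsto_logOdds r) hy
  refine lt_of_hasDerivAt_neg_of_tendsto_nhdsGT (fun y hy ↦ hasDerivAt_powMeanGap r hy)
    (fun y hy ↦ mul_neg_of_pos_of_neg (gapWeight_pos r hy) ?_) (tendsto_powMeanGap r) hx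
  rw [sub_neg, exp_lt_one_iff]
  exact hodds y hy

theorem eventually_powMeanGap_pos (hr : 3 / 5 < r) : ∀ᶠ x in 𝓝[>] 0, 0 < powMeanGap r x := by
  have hmem : ∀ᶠ x in 𝓝[>] (0 : ℝ), x ∈ Ioo 0 (π / 2) := Ioo_mem_nhdsGT pi_div_two_pos
  have hodds : ∀ᶠ x in 𝓝[>] 0, 0 < logOdds r x := by
    refine eventually_lt_of_hasDerivAt_pos (hmem.mono fun x hx ↦ hasDerivAt_logOdds r hx) ?_
      (tendsto_logOdds r)
    filter_upwards [hmem, tendsto_criticalExponent.eventually_lt_const hr] with x hx hlt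
    exact mul_pos (one_add_cusaRatio_mul_tan_pos hx) (sub_pos.2 hlt)
  refine eventually_lt_of_hasDerivAt_pos (hmem.mono fun x hx ↦ hasDerivAt_powMeanGap r hx) ?_
    (tendsto_powMeanGap r)
  filter_upwards [hmem, hodds] with x hx hpos
  exact mul_pos (gapWeight_pos r hx) (sub_pos.2 (one_lt_exp_iff.2 hpos))

theorem crossesDownOn_logOdds (r : ℝ) : CrossesDownOn (logOdds r) (Ioo 0 (π / 2)) := by
  have hanti : StrictAntiOn (fun x ↦ r - criticalExponent x) (Ioo 0 (π / 2)) :=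
    fun x hx y hy hxy ↦ sub_lt_sub_left (strictMonoOn_criticalExponent hx hy hxy) r
  exact ((CrossesDownOn.of_strictAntiOn hanti).mul_left
    fun x hx ↦ one_add_cusaRatio_mul_tan_pos hx).of_hasDerivAt
      (fun x hx ↦ hasDerivAt_logOdds r hx) (tendsto_logOdds r)

theorem powMeanGap_pos (hr : 0 < r) (hend : 0 ≤ powMeanGap r (π / 2)) (hx : x ∈ Ioo 0 (π / 2)) :
    0 < powMeanGap r x := by
  have hcross := (crossesDownOn_logOdds r).exp_sub_one.mul_left fun x hx ↦ gapWeight_pos r hx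
  have hcont : ContinuousOn (powMeanGap r) (Ioc 0 (π / 2)) := by
    intro y hy
    rcases hy.2.eq_or_lt with rfl | hlt
    · exact (continuousAt_powMeanGap_pi_div_two hr).continuousWithinAt
    · exact (hasDerivAt_powMeanGap r ⟨hy.1, hlt⟩).continuousAt.continuousWithinAt
  by_contra! hle
  exact (hend.trans_lt (hcross.right_lt_of_nonpos hcont (fun y hy ↦ hasDerivAt_powMeanGap r hy)
    (tendsto_powMeanGap r) hx hle)).not_ge hle

theorem powMeanGap_pi_div_two_nonneg (hr : 0 < r)
    (hpos : ∀ x ∈ Ioo 0 (π / 2), 0 < powMeanGap r x) : 0 ≤ powMeanGap r (π / 2) := by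
  have hlim : Tendsto (powMeanGap r) (𝓝[<] (π / 2)) (𝓝 (powMeanGap r (π / 2))) :=
    (continuousAt_powMeanGap_pi_div_two hr).continuousWithinAt
  refine ge_of_tendsto hlim ?_
  filter_upwards [Ioo_mem_nhdsLT pi_div_two_pos] with x hx using (hpos x hx).le

theorem powMeanGap_neg_iff : (∀ x ∈ Ioo 0 (π / 2), powMeanGap r x < 0) ↔ r ≤ 3 / 5 := by
  refine ⟨fun h ↦ le_of_not_gt fun hr ↦ ?_, fun hr x hx ↦ powMeanGap_neg hr hx⟩
  obtain ⟨x, hpos, hx⟩ :=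
    ((eventually_powMeanGap_pos hr).and (Ioo_mem_nhdsGT pi_div_two_pos)).exists
  exact hpos.not_gt (h x hx)

theorem powMeanGap_pi_div_two_nonneg_iff (hr : 0 < r) :
    0 ≤ powMeanGap r (π / 2) ↔ log 2 / (2 * (log π - log 2)) ≤ r := by
  have hlog : log 2 < log π := log_lt_log two_pos (by linarith [pi_gt_three])
  rw [powMeanGap_pi_div_two hr.ne', sub_nonneg, div_le_iff₀ hr, div_le_iff₀' (by linarith)]

theorem powMeanGap_pos_iff : (∀ x ∈ Ioo 0 (π / 2), 0 < powMeanGap r x) ↔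
    log 2 / (2 * (log π - log 2)) ≤ r := by
  have hlog : log 2 < log π := log_lt_log two_pos (by linarith [pi_gt_three])
  have hcrit : 0 < log 2 / (2 * (log π - log 2)) :=
    div_pos (log_pos one_lt_two) (by linarith)
  constructor
  · intro h
    have hr : 3 / 5 < r := by
      by_contra! hle
      have hx : π / 4 ∈ Ioo 0 (π / 2) := ⟨by positivity, by linarith [pi_pos]⟩
      exact (h _ hx).not_gt (powMeanGap_neg hle hx)
    have hr0 : 0 < r := by linarith
    exact (powMeanGap_pi_div_two_nonneg_iff hr0).1 (powMeanGap_pi_div_two_nonneg hr0 h)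
  · intro hr x hx
    have hr0 := hcrit.trans_le hr
    exact powMeanGap_pos hr0 ((powMeanGap_pi_div_two_nonneg_iff hr0).2 hr) hx

end Gap

theorem Hfun_sin_bounds (α β : ℝ) :
    (∀ x ∈ Ioo (0 : ℝ) (π / 2),
        Hfun α (cos x) < sin x / x ∧ sin x / x < Hfun β (cos x)) ↔
      (α ≤ 3 / 5 ∧ β ≥ Real.log 2 / (2 * (Real.log π - Real.log 2))) := by
  rw [ge_iff_le, ← powMeanGap_neg_iff, ← powMeanGap_pos_iff, ← forall₂_and]
  exact forall₂_congr fun x hx ↦ and_congr (Hfun_cos_lt_iff α hx) (lt_Hfun_cos_iff β hx)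
end

section
/- Let p be a nonzero real number. The inequality (sinh(x)/x)^(2p) + (tanh(x)/x)^p > 2 holds for every x ∈ (0, ∞) if and only if p > 0 or p ≤ −3/5. -/
open Real Set

/-!
Put `S = sinh x / x` and `T = tanh x / x`.

* For `p > 0`, Lazarević's inequality `cosh x < S ^ 3` says `1 < S ^ 2 * T`, and AM-GM applied to
  `S ^ (2 * p)` and `T ^ p` gives the claim.
* For `p ≤ -3/5`, Bernoulli's inequality reduces to the endpoint `p = -3/5`. There, with
  `A = (x / sinh x) ^ (3 / 5)` and `k = cosh x ^ (3 / 5)`, the claim reads `2 < A ^ 2 + A * k`,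
  that is, `A` exceeds the positive root of `W ^ 2 + W * k = 2`. This compares `x` with `sinh x`
  times a function of `cosh x`; the derivative of that product is algebraic in fractional powers of
  `cosh x`, so that differentiation leaves a polynomial inequality.
* For `-3/5 < p < 0`, the expansion
  `S ^ (2 * p) + T ^ p = 2 + p * (5 * p + 3) / 45 * x ^ 4 + o(x ^ 4)`
  at `0` has a negative leading correction.
-/

open Asymptotics Filter Topology

lemma two_lt_add_of_one_lt_mul {a b : ℝ} (ha : 0 < a) (h : 1 < a * b) : 2 < a + b := by
  nlinarith [sq_nonneg (a - 1)]

lemma two_lt_rpow_add_rpow_of_le {a b s t : ℝ} (ha : 0 ≤ a) (hb : 0 ≤ b) (hs : 0 < s)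
    (hst : s ≤ t) (h : 2 < a ^ s + b ^ s) : 2 < a ^ t + b ^ t := by
  have hexp : 1 ≤ t / s := (one_le_div hs).2 hst
  have hpow {u : ℝ} (hu : 0 ≤ u) : (u ^ s) ^ (t / s) = u ^ t := by
    rw [← rpow_mul hu, mul_div_cancel₀ t hs.ne']
  have bernoulli {u : ℝ} (hu : 0 ≤ u) : 1 + t / s * (u ^ s - 1) ≤ u ^ t := by
    simpa [hpow hu] using
      one_add_mul_self_le_rpow_one_add (s := u ^ s - 1) (by linarith [rpow_nonneg hu s]) hexp
  have hgain : 0 < t / s * (a ^ s + b ^ s - 2) := mul_pos (by linarith) (sub_pos.2 h)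
  linarith [bernoulli ha, bernoulli hb]

lemma pow_rpow_eq_zpow {m y : ℝ} (hm : 0 ≤ m) {n : ℕ} {k : ℤ} (h : n * y = k) :
    (m ^ n) ^ y = m ^ k := by
  rw [← rpow_natCast_mul hm, h, rpow_intCast]

lemma exists_one_lt_pow_eq {c : ℝ} (hc : 1 < c) {n : ℕ} (hn : n ≠ 0) : ∃ m, 1 < m ∧ m ^ n = c :=
  ⟨c ^ (n⁻¹ : ℝ), one_lt_rpow hc (by positivity), rpow_inv_natCast_pow (by linarith) hn⟩

section CompCosh

lemma hasDerivAt_sinh_mul_comp_cosh {F : ℝ → ℝ} {F' x : ℝ} (hF : HasDerivAt F F' (cosh x)) :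
    HasDerivAt (fun x => sinh x * F (cosh x))
      (cosh x * F (cosh x) + (cosh x ^ 2 - 1) * F') x := by
  refine ((hasDerivAt_sinh x).mul (hF.comp x (hasDerivAt_cosh x))).congr_deriv ?_
  rw [cosh_sq, Function.comp_apply]
  ring

variable {F F' : ℝ → ℝ} {C x : ℝ}

lemma sinh_mul_comp_cosh_lt_mul (hF : ∀ c, 1 ≤ c → HasDerivAt F (F' c) c)
    (hlt : ∀ c, 1 < c → c * F c + (c ^ 2 - 1) * F' c < C) (hx : 0 < x) :
    sinh x * F (cosh x) < C * x := by
  have hderiv (y : ℝ) := hasDerivAt_sinh_mul_comp_cosh (hF (cosh y) (one_le_cosh y))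
  have hdiff : Differentiable ℝ fun y => sinh y * F (cosh y) :=
    fun y => (hderiv y).differentiableAt
  have hslope (y : ℝ) (hy : y ∈ interior (Ici 0)) :
      deriv (fun y => sinh y * F (cosh y)) y < C := by
    rw [interior_Ici] at hy
    exact (hderiv y).deriv ▸ hlt _ (one_lt_cosh.2 (ne_of_gt hy))
  simpa using (convex_Ici 0).image_sub_lt_mul_sub_of_deriv_lt hdiff.continuous.continuousOn
    hdiff.differentiableOn hslope 0 self_mem_Ici x hx.le hx

lemma mul_lt_sinh_mul_comp_cosh (hF : ∀ c, 1 ≤ c → HasDerivAt F (F' c) c)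
    (hlt : ∀ c, 1 < c → C < c * F c + (c ^ 2 - 1) * F' c) (hx : 0 < x) :
    C * x < sinh x * F (cosh x) := by
  have hneg := sinh_mul_comp_cosh_lt_mul (fun c hc => (hF c hc).neg) (C := -C)
    (fun c hc => by simp only [Pi.neg_apply]; linarith [hlt c hc]) hx
  simpa using hneg

end CompCosh

/-- The left-hand side of the hyperbolic Wilker-type inequality with exponent `p`. -/
noncomputable def wilkerSum (p x : ℝ) : ℝ := (sinh x / x) ^ (2 * p) + (tanh x / x) ^ p

lemma wilkerSum_eq_sq_rpow_add (p : ℝ) {x : ℝ} (hx : 0 < x) :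
    wilkerSum p x = ((sinh x / x) ^ 2) ^ p + (tanh x / x) ^ p := by
  have hS : 0 ≤ sinh x / x := div_nonneg (sinh_nonneg_iff.2 hx.le) hx.le
  rw [wilkerSum, ← rpow_natCast_mul hS, Nat.cast_ofNat]

lemma wilkerSum_neg (q : ℝ) {x : ℝ} (hx : 0 < x) :
    wilkerSum (-q) x = ((x / sinh x) ^ 2) ^ q + (x / tanh x) ^ q := by
  rw [wilkerSum_eq_sq_rpow_add _ hx, rpow_neg_eq_inv_rpow, rpow_neg_eq_inv_rpow, ← inv_pow,
    inv_div, inv_div]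

lemma one_lt_mul_rpow_neg_third_add {c : ℝ} (hc : 1 < c) :
    1 < c * c ^ (-(1 / 3) : ℝ) + (c ^ 2 - 1) * (-(1 / 3) * c ^ (-(1 / 3) - 1 : ℝ)) := by
  obtain ⟨m, hm, rfl⟩ := exists_one_lt_pow_eq hc three_ne_zero
  have hm0 : 0 < m := by linarith
  rw [pow_rpow_eq_zpow hm0.le (k := -1) (by norm_num),
    pow_rpow_eq_zpow hm0.le (k := -4) (by norm_num), ← sub_pos]
  have hfactor : m ^ 3 * m ^ (-1 : ℤ) + ((m ^ 3) ^ 2 - 1) * (-(1 / 3) * m ^ (-4 : ℤ)) - 1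
      = (m ^ 2 - 1) ^ 2 * (2 * m ^ 2 + 1) / (3 * m ^ 4) := by
    field_simp
    ring
  have : 0 < m ^ 2 - 1 := sub_pos.2 (one_lt_pow₀ hm two_ne_zero)
  rw [hfactor]
  positivity

lemma lt_sinh_mul_cosh_rpow_neg_third {x : ℝ} (hx : 0 < x) :
    x < sinh x * cosh x ^ (-(1 / 3) : ℝ) := by
  simpa using mul_lt_sinh_mul_comp_cosh (C := 1)
    (fun _ hc => Real.hasDerivAt_rpow_const (Or.inl (by linarith)))
    (fun _ hc => one_lt_mul_rpow_neg_third_add hc) hx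

lemma one_lt_sq_sinh_div_mul_tanh_div {x : ℝ} (hx : 0 < x) :
    1 < (sinh x / x) ^ 2 * (tanh x / x) := by
  have hcubed := pow_lt_pow_left₀ (lt_sinh_mul_cosh_rpow_neg_third hx) hx.le three_ne_zero
  rw [mul_pow, ← rpow_mul_natCast (cosh_pos x).le,
    show (-(1 / 3) : ℝ) * (3 : ℕ) = -1 by norm_num, rpow_neg_one] at hcubed
  calc 1 < sinh x ^ 3 * (cosh x)⁻¹ / x ^ 3 := (one_lt_div (by positivity)).2 hcubed
    _ = (sinh x / x) ^ 2 * (tanh x / x) := by rw [tanh_eq_sinh_div_cosh]; field_simp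

lemma tanh_pos_of_pos {x : ℝ} (hx : 0 < x) : 0 < tanh x := by
  rw [tanh_eq_sinh_div_cosh]
  exact div_pos (sinh_pos_iff.2 hx) (cosh_pos x)

lemma two_lt_wilkerSum_of_pos {p x : ℝ} (hp : 0 < p) (hx : 0 < x) : 2 < wilkerSum p x := by
  have hS : 0 < sinh x / x := div_pos (sinh_pos_iff.2 hx) hx
  have hT : 0 < tanh x / x := div_pos (tanh_pos_of_pos hx) hx
  rw [wilkerSum_eq_sq_rpow_add p hx]
  refine two_lt_add_of_one_lt_mul (rpow_pos_of_pos (pow_pos hS 2) p) ?_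
  rw [← mul_rpow (by positivity) hT.le]
  exact one_lt_rpow (one_lt_sq_sinh_div_mul_tanh_div hx) hp

/-- The positive root `W` of `W ^ 2 + W * k = 2`. -/
noncomputable def wilkerRoot (k : ℝ) : ℝ := (√(k ^ 2 + 8) - k) / 2

lemma wilkerRoot_sq_add_mul (k : ℝ) : wilkerRoot k ^ 2 + wilkerRoot k * k = 2 := by
  have := sq_sqrt (show 0 ≤ k ^ 2 + 8 by positivity)
  unfold wilkerRoot
  linarith

lemma wilkerRoot_pos (k : ℝ) : 0 < wilkerRoot k :=
  half_pos <| sub_pos.2 <| (le_abs_self k).trans_lt <|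
    lt_sqrt_of_sq_lt (by rw [sq_abs]; linarith)

lemma two_lt_sq_add_mul_of_wilkerRoot_lt {a k : ℝ} (h : wilkerRoot k < a) :
    2 < a ^ 2 + a * k := by
  have hroot := wilkerRoot_sq_add_mul k
  have hsum : 0 < wilkerRoot k + k :=
    pos_of_mul_pos_right (by linarith) (wilkerRoot_pos k).le
  have hgap : 0 < (a - wilkerRoot k) * (a + (wilkerRoot k + k)) :=
    mul_pos (sub_pos.2 h) (by linarith [wilkerRoot_pos k])
  linarith

lemma hasDerivAt_wilkerRoot (k : ℝ) :
    HasDerivAt wilkerRoot (-wilkerRoot k / (2 * wilkerRoot k + k)) k := by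
  have hsqrt : 2 * wilkerRoot k + k = √(k ^ 2 + 8) := by unfold wilkerRoot; ring
  have hderiv : HasDerivAt (fun k : ℝ => k ^ 2 + 8) (2 * k) k := by
    simpa using (hasDerivAt_pow 2 k).add_const 8
  refine (((hderiv.sqrt (by positivity)).sub (hasDerivAt_id k)).div_const 2).congr_deriv ?_
  rw [hsqrt, wilkerRoot]
  field_simp
  ring

/-- The value of `a > 0` at which `(a ^ 2) ^ s + (a * c) ^ s` equals `2`; the inequality with
exponent `-s` compares it, at `c = cosh x`, with `a = x / sinh x`. -/
noncomputable def wilkerThreshold (s c : ℝ) : ℝ := wilkerRoot (c ^ s) ^ s⁻¹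

lemma two_lt_of_wilkerThreshold_lt {s c a : ℝ} (hs : 0 < s) (hc : 0 ≤ c)
    (h : wilkerThreshold s c < a) : 2 < (a ^ 2) ^ s + (a * c) ^ s := by
  have hroot := wilkerRoot_pos (c ^ s)
  have ha : 0 ≤ a := (rpow_nonneg hroot.le _).trans h.le
  rw [mul_rpow ha hc, ← rpow_pow_comm ha]
  exact two_lt_sq_add_mul_of_wilkerRoot_lt ((rpow_inv_lt_iff_of_pos hroot.le ha hs).1 h)

lemma hasDerivAt_wilkerThreshold {s c : ℝ} (hs : s ≠ 0) (hc : 0 < c) :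
    HasDerivAt (wilkerThreshold s)
      (-(wilkerThreshold s c * c ^ (s - 1) / (2 * wilkerRoot (c ^ s) + c ^ s))) c := by
  have hroot := wilkerRoot_pos (c ^ s)
  have hpow : HasDerivAt (fun c => c ^ s) (s * c ^ (s - 1)) c :=
    Real.hasDerivAt_rpow_const (Or.inl hc.ne')
  refine (((hasDerivAt_wilkerRoot _).comp c hpow).rpow_const (Or.inl hroot.ne')).congr_deriv ?_
  simp only [Function.comp_apply, wilkerThreshold]
  rw [rpow_sub_one hroot.ne']
  field_simp

-- The right-hand side is nine times the second Taylor polynomial of `y ^ (2 / 3)` at `y = 1`,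
-- evaluated at `y = q ^ 3`.
lemma nine_mul_sq_le {q : ℝ} (h0 : 0 ≤ q) (h1 : q ≤ 1) :
    9 * q ^ 2 ≤ 2 + 8 * q ^ 3 - (q ^ 3) ^ 2 := by
  have : 0 ≤ (1 - q) ^ 3 * (2 + 6 * q + 3 * q ^ 2 + q ^ 3) := by
    have := sub_nonneg.2 h1
    positivity
  linarith

lemma endpoint_polynomial_lt {v : ℝ} (hv : 1 < v) :
    (2 - v ^ 3) * (2 + 8 * (2 - v ^ 3) - (2 - v ^ 3) ^ 2)
      < 9 * (v ^ 10 - v ^ 2 * (v ^ 5 - 1) * (4 - v ^ 3)) := by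
  obtain ⟨u, hu, rfl⟩ : ∃ u, 0 < u ∧ v = 1 + u := ⟨v - 1, sub_pos.2 hv, by ring⟩
  rw [← sub_pos]
  calc 0 < 708 * u ^ 3 + 2319 * u ^ 4 + 3633 * u ^ 5 + 3442 * u ^ 6 + 2088 * u ^ 7
        + 801 * u ^ 8 + 179 * u ^ 9 + 18 * u ^ 10 := by positivity
    _ = _ := by ring

lemma endpoint_curve_lt {r v : ℝ} (hv : 1 < v) (h : r ^ 6 + v ^ 3 = 2) :
    v ^ 2 * (v ^ 5 - 1) * (2 * r ^ 6 + v ^ 3) < v ^ 10 - r ^ 10 := by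
  have hcube : (r ^ 2) ^ 3 = 2 - v ^ 3 := by linarith [pow_mul r 2 3]
  have hr : r ^ 2 ≤ 1 := (pow_le_one_iff_of_nonneg (sq_nonneg r) three_ne_zero).1
    (by linarith [one_lt_pow₀ hv three_ne_zero])
  have htaylor := mul_le_mul_of_nonneg_left (nine_mul_sq_le (sq_nonneg r) hr)
    (pow_nonneg (sq_nonneg r) 3)
  have hpoly := endpoint_polynomial_lt hv
  rw [← hcube] at hpoly
  rw [show 2 * r ^ 6 + v ^ 3 = 4 - v ^ 3 by linarith]
  linarith

lemma one_lt_mul_of_pow_six_add_eq_two {r m : ℝ} (hr : 0 < r) (hm : 1 < m)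
    (h : r ^ 6 + (r * m) ^ 3 = 2) : 1 < r * m := by
  by_contra! hle
  have hr1 : r < 1 := (lt_mul_of_one_lt_right hr hm).trans_le hle
  have hr6 : r ^ 6 < 1 := pow_lt_one₀ hr.le hr1 (by norm_num)
  have hrm : (r * m) ^ 3 ≤ 1 := pow_le_one₀ (by positivity) hle
  linarith

lemma endpoint_slope_lt {r m : ℝ} (hr : 0 < r) (hm : 1 < m) (h : r ^ 6 + (r * m) ^ 3 = 2) :
    m ^ 5 * r ^ 5 + ((m ^ 5) ^ 2 - 1) * -(r ^ 5 * m ^ (-2 : ℤ) / (2 * r ^ 3 + m ^ 3)) < 1 := by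
  have : 0 < m := by linarith
  have hcurve := sub_pos.2 (endpoint_curve_lt (one_lt_mul_of_pow_six_add_eq_two hr hm h) h)
  rw [← sub_pos]
  calc 0 < ((r * m) ^ 10 - r ^ 10 - (r * m) ^ 2 * ((r * m) ^ 5 - 1) * (2 * r ^ 6 + (r * m) ^ 3))
        / (r ^ 5 * m ^ 2 * (2 * r ^ 3 + m ^ 3)) := by positivity
    _ = _ := by field_simp; ring

lemma wilkerThreshold_three_fifths_slope_lt {c : ℝ} (hc : 1 < c) :
    c * wilkerThreshold (3 / 5) c + (c ^ 2 - 1) * -(wilkerThreshold (3 / 5) c * c ^ (3 / 5 - 1 : ℝ)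
      / (2 * wilkerRoot (c ^ (3 / 5 : ℝ)) + c ^ (3 / 5 : ℝ))) < 1 := by
  obtain ⟨m, hm, rfl⟩ := exists_one_lt_pow_eq hc (n := 5) (by norm_num)
  have hm0 : 0 ≤ m := by linarith
  have hW := wilkerRoot_pos (m ^ 3)
  obtain ⟨r, hr, hrW⟩ : ∃ r, 0 < r ∧ r ^ 3 = wilkerRoot (m ^ 3) :=
    ⟨_, rpow_pos_of_pos hW _, rpow_inv_natCast_pow hW.le three_ne_zero⟩
  have hcurve : r ^ 6 + (r * m) ^ 3 = 2 := by
    rw [← wilkerRoot_sq_add_mul (m ^ 3), ← hrW]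
    ring
  rw [wilkerThreshold, pow_rpow_eq_zpow hm0 (k := (3 : ℕ)) (by norm_num), zpow_natCast, ← hrW,
    pow_rpow_eq_zpow hm0 (k := -2) (by norm_num),
    pow_rpow_eq_zpow hr.le (k := (5 : ℕ)) (by norm_num), zpow_natCast]
  exact endpoint_slope_lt hr hm hcurve

lemma two_lt_wilkerSum_neg_three_fifths {x : ℝ} (hx : 0 < x) : 2 < wilkerSum (-(3 / 5)) x := by
  have hthreshold : sinh x * wilkerThreshold (3 / 5) (cosh x) < x := by
    simpa using sinh_mul_comp_cosh_lt_mul (C := 1)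
      (fun c hc => hasDerivAt_wilkerThreshold (by norm_num) (by linarith))
      (fun c hc => wilkerThreshold_three_fifths_slope_lt hc) hx
  have htanh : x / tanh x = x / sinh x * cosh x := by
    rw [tanh_eq_sinh_div_cosh, div_div_eq_mul_div, mul_div_right_comm]
  rw [wilkerSum_neg _ hx, htanh]
  exact two_lt_of_wilkerThreshold_lt (by norm_num) (cosh_pos x).le
    ((lt_div_iff₀' (sinh_pos_iff.2 hx)).2 hthreshold)

lemma two_lt_wilkerSum_of_le_neg_three_fifths {p x : ℝ} (hp : p ≤ -(3 / 5)) (hx : 0 < x) :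
    2 < wilkerSum p x := by
  have hendpoint := two_lt_wilkerSum_neg_three_fifths hx
  rw [wilkerSum_neg _ hx] at hendpoint
  rw [← neg_neg p, wilkerSum_neg _ hx]
  exact two_lt_rpow_add_rpow_of_le (sq_nonneg _) (div_pos hx (tanh_pos_of_pos hx)).le
    (by norm_num) (by linarith) hendpoint

/-- Along the filter `l`, `f = a + b * t + c * t ^ 2 + o(t ^ 2)`. The parameter `t` is itself a
function, so that even functions of `x` can be expanded in powers of `t = x ^ 2`. -/
def HasQuadraticExpansion {ι : Type*} (l : Filter ι) (t f : ι → ℝ) (a b c : ℝ) : Prop :=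
  (fun i => f i - (a + b * t i + c * t i ^ 2)) =o[l] fun i => t i ^ 2

lemma one_add_rpow_sub_isLittleO_sq (p : ℝ) :
    (fun u : ℝ => (1 + u) ^ p - (1 + p * u + p * (p - 1) / 2 * u ^ 2)) =o[𝓝 0] fun u => u ^ 2 := by
  have hchoose : Ring.choose p 2 = p * (p - 1) / 2 := by
    rw [Ring.choose_eq_smul]
    simp only [descPochhammer_succ_right, descPochhammer_zero, Polynomial.smeval_mul,
      Polynomial.smeval_sub, Polynomial.smeval_X, Polynomial.smeval_one, Nat.factorial_two,
      Nat.cast_ofNat, Nat.cast_zero, Nat.cast_one, sub_zero, one_mul, pow_zero, pow_one, one_smul,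
      smul_eq_mul]
    ring
  have hpartial (u : ℝ) :
      (binomialSeries ℝ p).partialSum 3 u = 1 + p * u + p * (p - 1) / 2 * u ^ 2 := by
    simp only [FormalMultilinearSeries.partialSum, binomialSeries, Finset.sum_range_succ,
      Finset.range_one, Finset.sum_singleton, FormalMultilinearSeries.apply_eq_prod_smul_coeff,
      FormalMultilinearSeries.coeff_ofScalars, Finset.prod_const, Finset.card_univ,
      Fintype.card_fin, Ring.choose_zero_right', Ring.choose_one_right', hchoose, smul_eq_mul,
      pow_zero, pow_one, mul_one]
    ring
  have hseries := (one_add_rpow_hasFPowerSeriesAt_zero (a := p)).isBigO_sub_partialSum_pow 3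
  simp only [zero_add, hpartial] at hseries
  have hcubic : (fun u : ℝ => ‖u‖ ^ 3) =o[𝓝 0] fun u => u ^ 2 := by
    simpa only [norm_pow] using (isLittleO_pow_pow (𝕜 := ℝ) (show 2 < 3 by norm_num)).norm_left
  exact hseries.trans_isLittleO hcubic

namespace HasQuadraticExpansion

variable {ι : Type*} {l : Filter ι} {t f g : ι → ℝ} {a b c a' b' c' : ℝ}

lemma tendsto (hf : HasQuadraticExpansion l t f a b c) (ht : Tendsto t l (𝓝 0)) :
    Tendsto f l (𝓝 a) := by
  have hrem : Tendsto (fun i => f i - (a + b * t i + c * t i ^ 2)) l (𝓝 0) :=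
    IsLittleO.trans_tendsto hf (by simpa using ht.pow 2)
  simpa using hrem.add (((ht.const_mul b).const_add a).add ((ht.pow 2).const_mul c))

lemma add (hf : HasQuadraticExpansion l t f a b c) (hg : HasQuadraticExpansion l t g a' b' c') :
    HasQuadraticExpansion l t (fun i => f i + g i) (a + a') (b + b') (c + c') :=
  (IsLittleO.add hf hg).congr_left fun i => by ring

lemma mul (hf : HasQuadraticExpansion l t f a b c) (hg : HasQuadraticExpansion l t g a' b' c')
    (ht : Tendsto t l (𝓝 0)) :
    HasQuadraticExpansion l t (fun i => f i * g i) (a * a') (a * b' + b * a')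
      (a * c' + b * b' + c * a') := by
  have hpoly : Tendsto (fun i => a + b * t i + c * t i ^ 2) l (𝓝 a) := by
    simpa using ((ht.const_mul b).const_add a).add ((ht.pow 2).const_mul c)
  have hcubic : Tendsto (fun i => t i * (b * c' + c * b' + c * c' * t i)) l (𝓝 0) := by
    simpa using ht.mul ((ht.const_mul (c * c')).const_add (b * c' + c * b'))
  have hfg : (fun i => (f i - (a + b * t i + c * t i ^ 2)) * g i) =o[l] fun i => t i ^ 2 := by
    simpa using IsLittleO.mul_isBigO hf ((hg.tendsto ht).isBigO_one ℝ)
  have hgf : (fun i => (a + b * t i + c * t i ^ 2) * (g i - (a' + b' * t i + c' * t i ^ 2)))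
      =o[l] fun i => t i ^ 2 := by
    simpa using (hpoly.isBigO_one ℝ).mul_isLittleO hg
  have htail : (fun i => t i * (b * c' + c * b' + c * c' * t i) * t i ^ 2)
      =o[l] fun i => t i ^ 2 := by
    simpa using ((isLittleO_one_iff ℝ).2 hcubic).mul_isBigO (isBigO_refl (fun i => t i ^ 2) l)
  exact ((hfg.add hgf).add htail).congr_left fun i => by ring

lemma rpow (hf : HasQuadraticExpansion l t f 1 b c) (ht : Tendsto t l (𝓝 0)) (p : ℝ) :
    HasQuadraticExpansion l t (fun i => f i ^ p) 1 (p * b)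
      (p * c + p * (p - 1) / 2 * b ^ 2) := by
  have hu : HasQuadraticExpansion l t (fun i => f i - 1) 0 b c :=
    IsLittleO.congr_left hf fun i => by ring
  have hu_sq : (fun i => (f i - 1) ^ 2 - b ^ 2 * t i ^ 2) =o[l] fun i => t i ^ 2 :=
    IsLittleO.congr_left (hu.mul hu ht) fun i => by ring
  have hu_bound : (fun i => (f i - 1) ^ 2) =O[l] fun i => t i ^ 2 :=
    (hu_sq.isBigO.add (isBigO_const_mul_self (b ^ 2) _ l)).congr_left fun i => by ring
  have hbinom : (fun i => f i ^ p - (1 + p * (f i - 1) + p * (p - 1) / 2 * (f i - 1) ^ 2))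
      =o[l] fun i => t i ^ 2 := by
    have hcomp := (one_add_rpow_sub_isLittleO_sq p).comp_tendsto (hu.tendsto ht)
    simp only [Function.comp_def, add_sub_cancel] at hcomp
    exact hcomp.trans_isBigO hu_bound
  exact ((hbinom.add (IsLittleO.const_mul_left hu p)).add
    (hu_sq.const_mul_left (p * (p - 1) / 2))).congr_left fun i => by ring

lemma eventually_lt (hf : HasQuadraticExpansion l t f a 0 c) (ht : ∀ᶠ i in l, t i ≠ 0)
    (hc : c < 0) : ∀ᶠ i in l, f i < a := by
  filter_upwards [IsLittleO.bound hf (half_pos (neg_pos.2 hc)), ht] with i hbound hti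
  have hsq : 0 < t i ^ 2 := by positivity
  rw [norm_of_nonneg hsq.le] at hbound
  linarith [(le_norm_self _).trans hbound, mul_neg_of_neg_of_pos hc hsq]

end HasQuadraticExpansion

lemma exp_neg_sub_sum_range_succ_isLittleO_pow (n : ℕ) :
    (fun x => exp (-x) - ∑ i ∈ Finset.range (n + 1), (-x) ^ i / i.factorial)
      =o[𝓝 0] fun x : ℝ => x ^ n := by
  have hneg := (exp_sub_sum_range_succ_isLittleO_pow n).comp_tendsto
    (continuous_neg.tendsto' (0 : ℝ) 0 neg_zero)
  exact (hneg.norm_right.congr_right fun x => by simp).of_norm_right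

lemma cosh_sub_isLittleO_pow_four :
    (fun x => cosh x - (1 + x ^ 2 / 2 + x ^ 4 / 24)) =o[𝓝 0] fun x : ℝ => x ^ 4 := by
  refine (((exp_sub_sum_range_succ_isLittleO_pow 4).add
    (exp_neg_sub_sum_range_succ_isLittleO_pow 4)).const_mul_left (1 / 2)).congr_left fun x => ?_
  simp only [cosh_eq, Finset.sum_range_succ, Finset.sum_range_zero, Nat.factorial]
  push_cast
  ring

lemma sinh_sub_isLittleO_pow_five :
    (fun x => sinh x - (x + x ^ 3 / 6 + x ^ 5 / 120)) =o[𝓝 0] fun x : ℝ => x ^ 5 := by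
  refine (((exp_sub_sum_range_succ_isLittleO_pow 5).sub
    (exp_neg_sub_sum_range_succ_isLittleO_pow 5)).const_mul_left (1 / 2)).congr_left fun x => ?_
  simp only [sinh_eq, Finset.sum_range_succ, Finset.sum_range_zero, Nat.factorial]
  push_cast
  ring

lemma tendsto_sq_nhdsNE_zero : Tendsto (fun x : ℝ => x ^ 2) (𝓝[≠] 0) (𝓝 0) :=
  ((continuous_pow 2).tendsto' 0 0 (zero_pow two_ne_zero)).mono_left nhdsWithin_le_nhds

lemma hasQuadraticExpansion_cosh :
    HasQuadraticExpansion (𝓝[≠] 0) (fun x : ℝ => x ^ 2) cosh 1 (1 / 2) (1 / 24) :=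
  (cosh_sub_isLittleO_pow_four.mono nhdsWithin_le_nhds).congr (fun x => by ring) fun x => by ring

lemma hasQuadraticExpansion_sinh_div :
    HasQuadraticExpansion (𝓝[≠] 0) (fun x : ℝ => x ^ 2) (fun x => sinh x / x)
      1 (1 / 6) (1 / 120) := by
  refine ((sinh_sub_isLittleO_pow_five.mono nhdsWithin_le_nhds).mul_isBigO
    (isBigO_refl (fun x : ℝ => x⁻¹) (𝓝[≠] 0))).congr' ?_ ?_
  all_goals
    filter_upwards [self_mem_nhdsWithin] with x (hx : x ≠ 0)
    field_simp

lemma hasQuadraticExpansion_tanh_div :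
    HasQuadraticExpansion (𝓝[≠] 0) (fun x : ℝ => x ^ 2) (fun x => tanh x / x)
      1 (-(1 / 3)) (2 / 15) := by
  convert! hasQuadraticExpansion_sinh_div.mul
    (hasQuadraticExpansion_cosh.rpow tendsto_sq_nhdsNE_zero (-1)) tendsto_sq_nhdsNE_zero using 1
  · ext x
    rw [tanh_eq_sinh_div_cosh, rpow_neg_one, ← div_eq_mul_inv, div_right_comm]
  all_goals norm_num

lemma hasQuadraticExpansion_wilkerSum (p : ℝ) :
    HasQuadraticExpansion (𝓝[≠] 0) (fun x : ℝ => x ^ 2) (wilkerSum p)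
      2 0 (p * (5 * p + 3) / 45) := by
  convert! (hasQuadraticExpansion_sinh_div.rpow tendsto_sq_nhdsNE_zero (2 * p)).add
    (hasQuadraticExpansion_tanh_div.rpow tendsto_sq_nhdsNE_zero p) using 1 <;> ring

lemma exists_wilkerSum_lt_two {p : ℝ} (hp : -(3 / 5) < p) (hp0 : p < 0) :
    ∃ x, 0 < x ∧ wilkerSum p x < 2 := by
  have hcoeff : p * (5 * p + 3) / 45 < 0 :=
    div_neg_of_neg_of_pos (mul_neg_of_neg_of_pos hp0 (by linarith)) (by norm_num)
  have hsq : ∀ᶠ x : ℝ in 𝓝[≠] 0, x ^ 2 ≠ 0 :=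
    eventually_mem_nhdsWithin.mono fun x hx => pow_ne_zero 2 hx
  have hlt : ∀ᶠ x in 𝓝[>] 0, wilkerSum p x < 2 :=
    ((hasQuadraticExpansion_wilkerSum p).eventually_lt hsq hcoeff).filter_mono
      (nhdsGT_le_nhdsNE 0)
  exact (eventually_mem_nhdsWithin.and hlt).exists

theorem wilker_zhu_hyp (p : ℝ) (hp : p ≠ 0) :
    (∀ x ∈ Ioi (0 : ℝ),
        (sinh x / x) ^ (2 * p) + (tanh x / x) ^ p > 2) ↔
      (0 < p ∨ p ≤ -(3 / 5)) := by
  constructor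
  · intro h
    by_contra! hrange
    obtain ⟨x, hx, hlt⟩ := exists_wilkerSum_lt_two hrange.2 (hrange.1.lt_of_ne hp)
    exact hlt.not_gt (h x hx)
  · rintro (hpos | hle) x hx
    · exact two_lt_wilkerSum_of_pos hpos hx
    · exact two_lt_wilkerSum_of_le_neg_three_fifths hle hx
end

section
/- For a nonzero real number r and a positive real t, define H_r(t) = ((√(8 + t^(2r)) + t^r)/4)^(1/r), and define H_0(t) = t^(1/3). Then for real numbers α, β, the double inequality H_α(cosh x) < sinh(x)/x < H_β(cosh x) holds for every x ∈ (0, ∞) if and only if α ≤ 0 and β ≥ 3/5. -/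
open Real Set

/-!
For `r ≠ 0`, `h = H_r(t)` is the positive solution of `2 h ^ r - h ^ (-r) = t ^ r`. Since
`y ↦ 2 y - y⁻¹` is increasing on `(0, ∞)`, comparing `H_r(t)` with a number amounts to inserting
that number into this equation. In particular `r ↦ H_r(t)` is increasing, by convexity of
`v ↦ v ^ p` for `p ≥ 1` and, across `r = 0`, by `2 y - y⁻¹ ≤ y ^ 3`. It therefore suffices to treat
`r = 0`, which is Lazarević's inequality, and `r = 3 / 5`.

Write `S = sinh x / x` and `C = cosh x`. For `r = 3 / 5` the claim is
`2 S ^ (6 / 5) - 1 < (C S) ^ (3 / 5)`. Taking logarithms and differentiating eliminates the power of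
`C S`, leaving a bound for `S ^ (6 / 5)` by an elementary quotient; doing so again eliminates
`S ^ (6 / 5)`. The remaining inequality is linear in the hyperbolic functions of `x`, `3 x`, `5 x`,
and its power series has nonnegative coefficients.

Conversely, `t / 2 ^ (1 / α) ≤ H_α(t)` for `α > 0` rules out the lower bound at `x = 2 ^ (1 / α)`,
and `2 S ^ β - S ^ (-β) - C ^ β = (β / 15 - β ^ 2 / 9) x ^ 4 + o(x ^ 4)` at `0` forces `3 / 5 ≤ β`.
-/

open Asymptotics Filter Topology
open scoped Nat

section HfunProperties

variable {p r s t y : ℝ}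

lemma strictMonoOn_two_mul_sub_inv : StrictMonoOn (fun y : ℝ ↦ 2 * y - y⁻¹) (Ioi 0) := by
  intro a ha b _ hab
  have := inv_strictAnti₀ ha hab
  simp only
  linarith

lemma two_mul_sub_inv_le_cube (hy : 0 < y) : 2 * y - y⁻¹ ≤ y ^ 3 := by
  have h : y ^ 3 - (2 * y - y⁻¹) = (y ^ 2 - 1) ^ 2 / y := by field
  have : 0 ≤ (y ^ 2 - 1) ^ 2 / y := by positivity
  linarith

lemma two_mul_rpow_sub_inv_le (hy : 0 < y) (hy' : 0 ≤ 2 * y - y⁻¹) (hp : 1 ≤ p) :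
    2 * y ^ p - (y ^ p)⁻¹ ≤ (2 * y - y⁻¹) ^ p := by
  set w := (y ^ 2)⁻¹ with hw
  have hw0 : 0 ≤ w := by positivity
  have factor : ∀ v : ℝ, 0 < v → 2 * v - v⁻¹ = v * (2 - (v ^ 2)⁻¹) := fun v hv ↦ by field
  have hw2 : 0 ≤ 2 - w := by
    rw [factor y hy] at hy'
    exact nonneg_of_mul_nonneg_right hy' hy
  -- convexity of `v ↦ v ^ p` at the points `w` and `2 - w`, whose midpoint is `1`
  have hconv : 2 - w ^ p ≤ (2 - w) ^ p := by
    have h := (convexOn_rpow hp).2 (mem_Ici.2 hw0) (mem_Ici.2 hw2)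
      (by norm_num : (0 : ℝ) ≤ 1 / 2) (by norm_num : (0 : ℝ) ≤ 1 / 2) (by norm_num)
    simp only [smul_eq_mul] at h
    rw [show 1 / 2 * w + 1 / 2 * (2 - w) = 1 by ring, one_rpow] at h
    linarith
  have hwp : ((y ^ p) ^ 2)⁻¹ = w ^ p := by
    rw [hw, inv_rpow (by positivity), rpow_pow_comm hy.le]
  rw [factor y hy, factor _ (rpow_pos_of_pos hy p), hwp, mul_rpow hy.le hw2]
  gcongr

lemma Hfun_zero (t : ℝ) : Hfun 0 t = t ^ ((1 : ℝ) / 3) := if_pos rfl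

lemma Hfun_pos (r : ℝ) (ht : 0 < t) : 0 < Hfun r t := by
  unfold Hfun
  split_ifs <;> positivity

lemma two_mul_Hfun_rpow_sub_inv (hr : r ≠ 0) (ht : 0 < t) :
    2 * Hfun r t ^ r - (Hfun r t ^ r)⁻¹ = t ^ r := by
  have hpow : Hfun r t ^ r = (√(8 + (t ^ r) ^ 2) + t ^ r) / 4 := by
    rw [Hfun, if_neg hr, ← rpow_mul (by positivity), one_div_mul_cancel hr, rpow_one, mul_comm 2 r,
      rpow_mul ht.le, rpow_two]
  have hsqrt : √(8 + (t ^ r) ^ 2) ^ 2 = 8 + (t ^ r) ^ 2 := sq_sqrt (by positivity)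
  rw [hpow]
  field_simp
  linear_combination 2 * hsqrt

lemma le_Hfun_iff (hr : 0 < r) (hs : 0 < s) (ht : 0 < t) :
    s ≤ Hfun r t ↔ 2 * s ^ r - (s ^ r)⁻¹ ≤ t ^ r := by
  have hH := Hfun_pos r ht
  rw [← rpow_le_rpow_iff hs.le hH.le hr, ← two_mul_Hfun_rpow_sub_inv hr.ne' ht]
  exact (strictMonoOn_two_mul_sub_inv.le_iff_le (rpow_pos_of_pos hs r)
    (rpow_pos_of_pos hH r)).symm

lemma lt_Hfun_iff (hr : 0 < r) (hs : 0 < s) (ht : 0 < t) :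
    s < Hfun r t ↔ 2 * s ^ r - (s ^ r)⁻¹ < t ^ r := by
  have hH := Hfun_pos r ht
  rw [← rpow_lt_rpow_iff hs.le hH.le hr, ← two_mul_Hfun_rpow_sub_inv hr.ne' ht]
  exact (strictMonoOn_two_mul_sub_inv.lt_iff_lt (rpow_pos_of_pos hs r)
    (rpow_pos_of_pos hH r)).symm

lemma Hfun_le_iff_of_neg (hr : r < 0) (hs : 0 < s) (ht : 0 < t) :
    Hfun r t ≤ s ↔ 2 * s ^ r - (s ^ r)⁻¹ ≤ t ^ r := by
  have hH := Hfun_pos r ht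
  rw [← rpow_le_rpow_iff_of_neg hs hH hr, ← two_mul_Hfun_rpow_sub_inv hr.ne ht]
  exact (strictMonoOn_two_mul_sub_inv.le_iff_le (rpow_pos_of_pos hs r)
    (rpow_pos_of_pos hH r)).symm

lemma two_mul_Hfun_zero_rpow_sub_inv_le (r : ℝ) (ht : 0 < t) :
    2 * Hfun 0 t ^ r - (Hfun 0 t ^ r)⁻¹ ≤ t ^ r := by
  refine (two_mul_sub_inv_le_cube (rpow_pos_of_pos (Hfun_pos 0 ht) r)).trans_eq ?_
  rw [Hfun_zero, ← rpow_natCast, ← rpow_mul ht.le, ← rpow_mul ht.le]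
  congr 1
  push_cast
  ring

lemma two_mul_Hfun_rpow_mul_sub_inv_le (hr : r ≠ 0) (ht : 0 < t) (hp : 1 ≤ p) :
    2 * Hfun r t ^ (r * p) - (Hfun r t ^ (r * p))⁻¹ ≤ t ^ (r * p) := by
  have hH := Hfun_pos r ht
  have heq := two_mul_Hfun_rpow_sub_inv hr ht
  rw [rpow_mul hH.le, rpow_mul ht.le, ← heq]
  exact two_mul_rpow_sub_inv_le (rpow_pos_of_pos hH r) (heq ▸ (rpow_pos_of_pos ht r).le) hp

lemma Hfun_le_Hfun_of_pos (hr : 0 < r) (hrs : r ≤ s) (ht : 0 < t) : Hfun r t ≤ Hfun s t := by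
  have h := two_mul_Hfun_rpow_mul_sub_inv_le hr.ne' ht ((one_le_div hr).2 hrs)
  rw [mul_div_cancel₀ s hr.ne'] at h
  exact (le_Hfun_iff (hr.trans_le hrs) (Hfun_pos r ht) ht).2 h

lemma Hfun_le_Hfun_of_neg (hs : s < 0) (hrs : r ≤ s) (ht : 0 < t) : Hfun r t ≤ Hfun s t := by
  have h := two_mul_Hfun_rpow_mul_sub_inv_le hs.ne ht ((one_le_div_of_neg hs).2 hrs)
  rw [mul_div_cancel₀ r hs.ne] at h
  exact (Hfun_le_iff_of_neg (hrs.trans_lt hs) (Hfun_pos s ht) ht).2 h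

lemma Hfun_zero_le (hr : 0 ≤ r) (ht : 0 < t) : Hfun 0 t ≤ Hfun r t := by
  rcases hr.eq_or_lt with rfl | hr
  · rfl
  · exact (le_Hfun_iff hr (Hfun_pos 0 ht) ht).2 (two_mul_Hfun_zero_rpow_sub_inv_le r ht)

lemma Hfun_le_zero (hr : r ≤ 0) (ht : 0 < t) : Hfun r t ≤ Hfun 0 t := by
  rcases hr.eq_or_lt with rfl | hr
  · rfl
  · exact (Hfun_le_iff_of_neg hr (Hfun_pos 0 ht) ht).2 (two_mul_Hfun_zero_rpow_sub_inv_le r ht)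

theorem Hfun_monotone (ht : 0 < t) : Monotone fun r ↦ Hfun r t := by
  intro r s hrs
  rcases lt_or_ge 0 r with hr | hr
  · exact Hfun_le_Hfun_of_pos hr hrs ht
  rcases lt_or_ge s 0 with hs | hs
  · exact Hfun_le_Hfun_of_neg hs hrs ht
  · exact (Hfun_le_zero hr ht).trans (Hfun_zero_le hs ht)

lemma div_two_rpow_le_Hfun (hr : 0 < r) (ht : 0 < t) : t / 2 ^ (1 / r) ≤ Hfun r t := by
  rw [le_Hfun_iff hr (by positivity) ht, div_rpow ht.le (by positivity),
    ← rpow_mul two_pos.le, one_div_mul_cancel hr.ne', rpow_one, mul_div_cancel₀ _ two_ne_zero]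
  exact sub_le_self _ (by positivity)

end HfunProperties

section HyperbolicInequalities

variable {x : ℝ}

lemma lt_of_tendsto_of_hasDerivAt_pos {f f' : ℝ → ℝ} {a l : ℝ}
    (hderiv : ∀ x, a < x → HasDerivAt f (f' x) x) (hpos : ∀ x, a < x → 0 < f' x)
    (hlim : Tendsto f (𝓝[>] a) (𝓝 l)) (hx : a < x) : l < f x := by
  have hmono : StrictMonoOn f (Ioi a) := by
    refine strictMonoOn_of_deriv_pos (convex_Ioi a)
      (fun y hy ↦ (hderiv y hy).continuousAt.continuousWithinAt) fun y hy ↦ ?_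
    rw [interior_Ioi] at hy
    exact (hderiv y hy).deriv ▸ hpos y hy
  obtain ⟨b, hab, hbx⟩ := exists_between hx
  have hlb : l ≤ f b := by
    refine le_of_tendsto hlim ?_
    filter_upwards [Ioo_mem_nhdsGT hab] with y hy
    exact (hmono hy.1 hab hy.2).le
  exact hlb.trans_lt (hmono hab hx hbx)

lemma lt_of_hasDerivAt_pos {f f' : ℝ → ℝ} {a : ℝ}
    (hderiv : ∀ x, a ≤ x → HasDerivAt f (f' x) x) (hpos : ∀ x, a < x → 0 < f' x) (hx : a < x) :
    f a < f x :=
  lt_of_tendsto_of_hasDerivAt_pos (fun y hy ↦ hderiv y hy.le) hpos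
    ((hderiv a le_rfl).continuousAt.tendsto.mono_left nhdsWithin_le_nhds) hx

lemma sinh_lt_self_mul_cosh (hx : 0 < x) : sinh x < x * cosh x := by
  have hderiv (y : ℝ) : HasDerivAt (fun y ↦ y * cosh y - sinh y) (y * sinh y) y :=
    (((hasDerivAt_id' y).mul (hasDerivAt_cosh y)).sub (hasDerivAt_sinh y)).congr_deriv (by ring)
  simpa using lt_of_hasDerivAt_pos (fun y _ ↦ hderiv y)
    (fun y hy ↦ mul_pos hy (sinh_pos_iff.2 hy)) hx

lemma sinh_div_self_pos (hx : 0 < x) : 0 < sinh x / x := div_pos (sinh_pos_iff.2 hx) hx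

lemma one_lt_sinh_div_self (hx : 0 < x) : 1 < sinh x / x :=
  (one_lt_div hx).2 (self_lt_sinh_iff.2 hx)

lemma tendsto_sinh_div_self : Tendsto (fun x ↦ sinh x / x) (𝓝[>] 0) (𝓝 1) := by
  have h : Tendsto (slope sinh 0) (𝓝[≠] 0) (𝓝 1) := by
    simpa only [cosh_zero] using (hasDerivAt_sinh 0).tendsto_slope
  refine (h.mono_left (nhdsWithin_mono 0 fun x hx ↦ ne_of_gt hx)).congr fun x ↦ ?_
  rw [slope_def_field, sinh_zero, sub_zero, sub_zero]

lemma hasDerivAt_log_sinh_div_self (hx : 0 < x) :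
    HasDerivAt (fun x ↦ log (sinh x / x)) (cosh x / sinh x - 1 / x) x := by
  have : 0 < sinh x := sinh_pos_iff.2 hx
  refine (((hasDerivAt_sinh x).div (hasDerivAt_id' x) hx.ne').log
    (sinh_div_self_pos hx).ne').congr_deriv ?_
  simp only [Pi.div_apply]
  field

lemma hasDerivAt_sinh_div_self_rpow (p : ℝ) (hx : 0 < x) :
    HasDerivAt (fun x ↦ (sinh x / x) ^ p)
      (p * (cosh x / sinh x - 1 / x) * (sinh x / x) ^ p) x := by
  have : 0 < sinh x := sinh_pos_iff.2 hx
  refine (((hasDerivAt_sinh x).div (hasDerivAt_id' x) hx.ne').rpow_const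
    (Or.inl (sinh_div_self_pos hx).ne')).congr_deriv ?_
  simp only [Pi.div_apply]
  rw [rpow_sub_one (sinh_div_self_pos hx).ne']
  field

/-- Lazarević's inequality. In terms of `v = cosh y ^ (1 / 3)`, the derivative of
`sinh y / cosh y ^ (1 / 3) - y` is the rational function `(v² - 1)² (2 v² + 1) / (3 v⁴)`. -/
lemma cosh_rpow_one_third_lt_sinh_div_self (hx : 0 < x) :
    cosh x ^ ((1 : ℝ) / 3) < sinh x / x := by
  have hderiv (y : ℝ) : HasDerivAt (fun y ↦ sinh y * cosh y ^ (-(1 : ℝ) / 3) - y)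
      (cosh y * cosh y ^ (-(1 : ℝ) / 3) + sinh y * (sinh y * (-(1 : ℝ) / 3) *
        cosh y ^ (-(1 : ℝ) / 3 - 1)) - 1) y :=
    ((hasDerivAt_sinh y).mul ((hasDerivAt_cosh y).rpow_const (Or.inl (cosh_pos y).ne'))).sub
      (hasDerivAt_id' y)
  have hderiv_pos (y : ℝ) (hy : 0 < y) : 0 < cosh y * cosh y ^ (-(1 : ℝ) / 3) +
      sinh y * (sinh y * (-(1 : ℝ) / 3) * cosh y ^ (-(1 : ℝ) / 3 - 1)) - 1 := by
    obtain ⟨v, hv, hcosh⟩ : ∃ v : ℝ, 1 < v ∧ cosh y = v ^ (3 : ℝ) :=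
      ⟨cosh y ^ ((1 : ℝ) / 3), one_lt_rpow (one_lt_cosh.2 hy.ne') (by norm_num), by
        rw [← rpow_mul (cosh_pos y).le]; norm_num⟩
    have hv0 : 0 < v := one_pos.trans hv
    have hsinh : sinh y ^ 2 = v ^ 6 - 1 := by
      rw [sinh_sq, hcosh]
      norm_cast
      ring
    have hfactor : cosh y * cosh y ^ (-(1 : ℝ) / 3) + sinh y * (sinh y * (-(1 : ℝ) / 3) *
        cosh y ^ (-(1 : ℝ) / 3 - 1)) - 1 = (v ^ 2 - 1) ^ 2 * (2 * v ^ 2 + 1) / (3 * v ^ 4) := by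
      rw [rpow_sub_one (cosh_pos y).ne', hcosh, ← rpow_mul hv0.le]
      norm_num [rpow_neg_one]
      field_simp
      linear_combination - hsinh
    rw [hfactor]
    have : 0 < v ^ 2 - 1 := by nlinarith
    positivity
  have h : x < sinh x * cosh x ^ (-(1 : ℝ) / 3) := by
    simpa using lt_of_hasDerivAt_pos (fun y _ ↦ hderiv y) hderiv_pos hx
  rw [neg_div, rpow_neg (cosh_pos x).le, ← div_eq_mul_inv,
    lt_div_iff₀ (rpow_pos_of_pos (cosh_pos x) _)] at h
  rwa [lt_div_iff₀' hx]

end HyperbolicInequalities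

section PowerSeries

lemma descFactorial_mul_pow_div_factorial (k m : ℕ) (x : ℝ) :
    (k + m).descFactorial k * (x ^ (k + m) / (k + m)!) = x ^ k * (x ^ m / m !) := by
  have h : m ! * (k + m).descFactorial k = (k + m)! := by
    simpa using Nat.factorial_mul_descFactorial (Nat.le_add_right k m)
  rw [← h, pow_add, Nat.cast_mul]
  have : (k + m).descFactorial k ≠ 0 := by simp
  field

lemma hasSum_pow_even_mul_sinh (j : ℕ) (x : ℝ) :
    HasSum (fun n ↦ (2 * n + 1).descFactorial (2 * j) * (x ^ (2 * n + 1) / (2 * n + 1)!))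
      (x ^ (2 * j) * sinh x) := by
  rw [← hasSum_nat_add_iff' j, Finset.sum_eq_zero fun n hn ↦ ?_, sub_zero]
  · refine ((hasSum_sinh x).mul_left (x ^ (2 * j))).congr_fun fun n ↦ ?_
    rw [← descFactorial_mul_pow_div_factorial, show 2 * j + (2 * n + 1) = 2 * (n + j) + 1 by ring]
  · rw [Nat.descFactorial_eq_zero_iff_lt.2 (by grind), Nat.cast_zero, zero_mul]

lemma hasSum_pow_odd_mul_cosh (j : ℕ) (x : ℝ) :
    HasSum (fun n ↦ (2 * n + 1).descFactorial (2 * j + 1) * (x ^ (2 * n + 1) / (2 * n + 1)!))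
      (x ^ (2 * j + 1) * cosh x) := by
  rw [← hasSum_nat_add_iff' j, Finset.sum_eq_zero fun n hn ↦ ?_, sub_zero]
  · refine ((hasSum_cosh x).mul_left (x ^ (2 * j + 1))).congr_fun fun n ↦ ?_
    rw [← descFactorial_mul_pow_div_factorial, show 2 * j + 1 + 2 * n = 2 * (n + j) + 1 by ring]
  · rw [Nat.descFactorial_eq_zero_iff_lt.2 (by grind), Nat.cast_zero, zero_mul]

lemma cast_descFactorial_three {R : Type*} [CommRing R] (n : ℕ) :
    (n.descFactorial 3 : R) = n * (n - 1) * (n - 2) := by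
  rcases n with _ | _ | n
  · simp
  · simp
  · simp only [Nat.descFactorial, Nat.reduceSubDiff, add_tsub_cancel_right, tsub_zero, mul_one,
      Nat.cast_mul, Nat.cast_add, Nat.cast_one, add_sub_cancel_right]
    ring

lemma hasSum_cubic_mul_pow_div_factorial (p₀ p₁ p₂ p₃ x : ℝ) :
    HasSum (fun n : ℕ ↦ (p₀ + p₁ * (2 * n + 1) + p₂ * ((2 * n + 1) * (2 * n)) +
        p₃ * ((2 * n + 1) * (2 * n) * (2 * n - 1))) * (x ^ (2 * n + 1) / (2 * n + 1)!))
      (p₀ * sinh x + p₁ * (x * cosh x) + p₂ * (x ^ 2 * sinh x) + p₃ * (x ^ 3 * cosh x)) := by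
  have h := ((((hasSum_pow_even_mul_sinh 0 x).mul_left p₀).add
    ((hasSum_pow_odd_mul_cosh 0 x).mul_left p₁)).add
    ((hasSum_pow_even_mul_sinh 1 x).mul_left p₂)).add ((hasSum_pow_odd_mul_cosh 1 x).mul_left p₃)
  simp only [mul_zero, zero_add, mul_one, pow_zero, pow_one, one_mul, Nat.reduceAdd,
    Nat.descFactorial_zero, Nat.descFactorial_one, Nat.cast_descFactorial_two,
    cast_descFactorial_three, Nat.cast_one] at h
  refine h.congr_fun fun n ↦ ?_
  push_cast
  ring

lemma multipleAngle_coeff_nonneg (n : ℕ) :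
    0 ≤ (3 - 14 / 5 * (2 * n + 1) + 6 / 25 * ((2 * n + 1) * (2 * n)) : ℝ) * 5 ^ (2 * n + 1)
      + (-3 + 2 * (2 * n + 1) + 22 / 9 * ((2 * n + 1) * (2 * n))
        + 16 / 27 * ((2 * n + 1) * (2 * n) * (2 * n - 1))) * 3 ^ (2 * n + 1)
      + (-6 + 8 * (2 * n + 1) + 48 * ((2 * n + 1) * (2 * n))
        - 64 * ((2 * n + 1) * (2 * n) * (2 * n - 1))) := by
  rcases lt_or_ge n 6 with hn | hn
  · interval_cases n <;> norm_num
  have hn' : (6 : ℝ) ≤ n := mod_cast hn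
  have h5 : 0 ≤ (3 - 14 / 5 * (2 * n + 1) + 6 / 25 * ((2 * n + 1) * (2 * n)) : ℝ) := by nlinarith
  have h3 : (3 : ℝ) ^ 13 ≤ 3 ^ (2 * n + 1) := pow_le_pow_right₀ (by norm_num) (by omega)
  have hquad : 0 ≤ (2 * n + 1) * (2 * n : ℝ) := by positivity
  have hcubic : 0 ≤ (2 * n + 1) * (2 * n) * (2 * n - 1 : ℝ) :=
    mul_nonneg hquad (by linarith)
  have hprod : 16 / 27 * ((2 * n + 1) * (2 * n) * (2 * n - 1)) * (3 : ℝ) ^ 13 ≤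
      (-3 + 2 * (2 * n + 1) + 22 / 9 * ((2 * n + 1) * (2 * n))
        + 16 / 27 * ((2 * n + 1) * (2 * n) * (2 * n - 1))) * 3 ^ (2 * n + 1) :=
    mul_le_mul (by linarith) h3 (by positivity) (by linarith)
  have := mul_nonneg h5 (by positivity : (0 : ℝ) ≤ 5 ^ (2 * n + 1))
  linarith

lemma multipleAngle_combination_pos {x : ℝ} (hx : 0 < x) :
    0 < 3 * sinh (5 * x) - 14 * x * cosh (5 * x) + 6 * x ^ 2 * sinh (5 * x)
      - 3 * sinh (3 * x) + 6 * x * cosh (3 * x) + 22 * x ^ 2 * sinh (3 * x)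
      + 16 * x ^ 3 * cosh (3 * x)
      - 6 * sinh x + 8 * x * cosh x + 48 * x ^ 2 * sinh x - 64 * x ^ 3 * cosh x := by
  have hsum := ((hasSum_cubic_mul_pow_div_factorial 3 (-14 / 5) (6 / 25) 0 (5 * x)).add
    (hasSum_cubic_mul_pow_div_factorial (-3) 2 (22 / 9) (16 / 27) (3 * x))).add
    (hasSum_cubic_mul_pow_div_factorial (-6) 8 48 (-64) x)
  -- the coefficients of `x ^ (2 * n + 1)` vanish for `n < 5`
  have hterm : 0 < 86507520 / 39916800 * x ^ 11 := by positivity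
  refine (hterm.trans_eq ?_).trans_le ((le_hasSum hsum 5 fun n _ ↦ ?_).trans_eq ?_)
  · norm_num [Nat.factorial]
    ring
  · refine (mul_nonneg (multipleAngle_coeff_nonneg n)
      (by positivity : 0 ≤ x ^ (2 * n + 1) / (2 * n + 1)!)).trans_eq ?_
    simp only [mul_pow]
    ring
  · ring

lemma sinh_five_mul (x : ℝ) : sinh (5 * x) = 16 * sinh x ^ 5 + 20 * sinh x ^ 3 + 5 * sinh x := by
  rw [show 5 * x = 3 * x + 2 * x by ring, sinh_add, sinh_two_mul, cosh_two_mul, sinh_three_mul,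
    cosh_three_mul]
  grind [cosh_sq x]

lemma cosh_five_mul (x : ℝ) : cosh (5 * x) = cosh x * (16 * sinh x ^ 4 + 12 * sinh x ^ 2 + 1) := by
  rw [show 5 * x = 3 * x + 2 * x by ring, cosh_add, sinh_two_mul, cosh_two_mul, sinh_three_mul,
    cosh_three_mul]
  grind [cosh_sq x]

end PowerSeries

section SharpUpperBound

/-- `x * sinh x * cosh x` times the logarithmic derivative of `cosh x * (sinh x / x)`. Its
quotient by `logDerivDivNum x` is what `2 * (sinh x / x) ^ (6 / 5)` has to exceed for
`3 / 5 * log (cosh x * (sinh x / x)) - log (2 * (sinh x / x) ^ (6 / 5) - 1)` to increase. -/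
noncomputable def logDerivMulNum (x : ℝ) : ℝ := x * (cosh x ^ 2 + sinh x ^ 2) - sinh x * cosh x

/-- `x * sinh x * cosh x` times the logarithmic derivative of `cosh x / (sinh x / x)`, simplified
by `cosh x ^ 2 - sinh x ^ 2 = 1`; the denominator in the bound for `(sinh x / x) ^ (6 / 5)`. -/
noncomputable def logDerivDivNum (x : ℝ) : ℝ := sinh x * cosh x - x

variable {x : ℝ}

lemma logDerivMulNum_pos (hx : 0 < x) : 0 < logDerivMulNum x := by
  have h := sinh_lt_self_mul_cosh (mul_pos two_pos hx)
  rw [sinh_two_mul, cosh_two_mul] at h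
  unfold logDerivMulNum
  linarith

lemma logDerivDivNum_pos (hx : 0 < x) : 0 < logDerivDivNum x := by
  have h := self_lt_sinh_iff.2 (mul_pos two_pos hx)
  rw [sinh_two_mul] at h
  unfold logDerivDivNum
  linarith

lemma hasDerivAt_logDerivMulNum (x : ℝ) :
    HasDerivAt logDerivMulNum (4 * x * sinh x * cosh x) x := by
  refine (((hasDerivAt_id' x).mul (((hasDerivAt_cosh x).pow 2).add
    ((hasDerivAt_sinh x).pow 2))).sub
    ((hasDerivAt_sinh x).mul (hasDerivAt_cosh x))).congr_deriv ?_
  simp only [Pi.add_apply, Pi.pow_apply]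
  ring

lemma hasDerivAt_logDerivDivNum (x : ℝ) : HasDerivAt logDerivDivNum (2 * sinh x ^ 2) x :=
  (((hasDerivAt_sinh x).mul (hasDerivAt_cosh x)).sub (hasDerivAt_id' x)).congr_deriv
    (by linear_combination cosh_sq x)

lemma tendsto_logDerivMulNum_div_logDerivDivNum :
    Tendsto (fun x ↦ logDerivMulNum x / logDerivDivNum x) (𝓝[>] 0) (𝓝 2) := by
  have hMul : Tendsto logDerivMulNum (𝓝[>] 0) (𝓝 0) := by
    simpa [logDerivMulNum] using
      (hasDerivAt_logDerivMulNum 0).continuousAt.tendsto.mono_left nhdsWithin_le_nhds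
  have hDiv : Tendsto logDerivDivNum (𝓝[>] 0) (𝓝 0) := by
    simpa [logDerivDivNum] using
      (hasDerivAt_logDerivDivNum 0).continuousAt.tendsto.mono_left nhdsWithin_le_nhds
  have hcosh : Tendsto cosh (𝓝[>] 0) (𝓝 1) := by
    simpa using (continuous_cosh.tendsto 0).mono_left nhdsWithin_le_nhds
  refine HasDerivAt.lhopital_zero_nhdsGT (.of_forall hasDerivAt_logDerivMulNum)
    (.of_forall hasDerivAt_logDerivDivNum) ?_ hMul hDiv ?_
  · filter_upwards [self_mem_nhdsWithin] with x hx
    have := sinh_pos_iff.2 hx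
    positivity
  · have hlim := (hcosh.div tendsto_sinh_div_self one_ne_zero).const_mul 2
    rw [div_one, mul_one] at hlim
    refine hlim.congr' ?_
    filter_upwards [self_mem_nhdsWithin] with x hx
    have := (sinh_pos_iff.2 hx).ne'
    have : x ≠ 0 := ne_of_gt hx
    simp only [Pi.div_apply]
    field

lemma logDerivNum_poly_pos (hx : 0 < x) :
    0 < 3 * (x * cosh x - sinh x) * logDerivDivNum x * logDerivMulNum x
      - 5 * x * sinh x ^ 2 *
        (2 * x * cosh x * logDerivDivNum x - sinh x * logDerivMulNum x) := by
  have h := multipleAngle_combination_pos hx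
  have hcosh_three : cosh (3 * x) = cosh x * (4 * sinh x ^ 2 + 1) := by
    rw [cosh_three_mul]
    linear_combination 4 * cosh x * cosh_sq x
  rw [sinh_five_mul, cosh_five_mul, sinh_three_mul, hcosh_three] at h
  refine pos_of_mul_pos_right (a := 16) (h.trans_eq ?_) (by norm_num)
  unfold logDerivMulNum logDerivDivNum
  linear_combination -(48 * sinh x ^ 3 - 96 * x * sinh x ^ 2 * cosh x + 144 * x ^ 2 * sinh x
    + 48 * x ^ 2 * sinh x * cosh x ^ 2 + 16 * x ^ 2 * sinh x ^ 3
    - 48 * x ^ 3 * cosh x) * cosh_sq x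

lemma logDeriv_logDerivMulNum_div_logDerivDivNum_lt (hx : 0 < x) :
    4 * x * sinh x * cosh x / logDerivMulNum x - 2 * sinh x ^ 2 / logDerivDivNum x <
      6 / 5 * (cosh x / sinh x - 1 / x) := by
  have := sinh_pos_iff.2 hx
  have hM := logDerivMulNum_pos hx
  have hD := logDerivDivNum_pos hx
  refine sub_pos.1 ((div_pos (mul_pos two_pos (logDerivNum_poly_pos hx)) (by positivity :
    0 < 5 * x * sinh x * logDerivMulNum x * logDerivDivNum x)).trans_eq ?_)
  field

lemma logDerivMulNum_lt (hx : 0 < x) :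
    logDerivMulNum x < 2 * (sinh x / x) ^ ((6 : ℝ) / 5) * logDerivDivNum x := by
  have hderiv (y : ℝ) (hy : 0 < y) : HasDerivAt
      (fun y ↦ 6 / 5 * log (sinh y / y) - (log (logDerivMulNum y) - log (logDerivDivNum y)))
      (6 / 5 * (cosh y / sinh y - 1 / y) - (4 * y * sinh y * cosh y / logDerivMulNum y
        - 2 * sinh y ^ 2 / logDerivDivNum y)) y :=
    ((hasDerivAt_log_sinh_div_self hy).const_mul (6 / 5)).sub
      (((hasDerivAt_logDerivMulNum y).log (logDerivMulNum_pos hy).ne').sub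
        ((hasDerivAt_logDerivDivNum y).log (logDerivDivNum_pos hy).ne'))
  have hlim : Tendsto
      (fun y ↦ 6 / 5 * log (sinh y / y) - (log (logDerivMulNum y) - log (logDerivDivNum y)))
      (𝓝[>] 0) (𝓝 (-log 2)) := by
    have h := ((tendsto_sinh_div_self.log one_ne_zero).const_mul (6 / 5)).sub
      (tendsto_logDerivMulNum_div_logDerivDivNum.log two_ne_zero)
    rw [log_one, mul_zero, zero_sub] at h
    refine h.congr' ?_
    filter_upwards [self_mem_nhdsWithin] with y hy
    rw [log_div (logDerivMulNum_pos hy).ne' (logDerivDivNum_pos hy).ne']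
  have h := lt_of_tendsto_of_hasDerivAt_pos hderiv
    (fun y hy ↦ sub_pos.2 (logDeriv_logDerivMulNum_div_logDerivDivNum_lt hy)) hlim hx
  have hS : 0 < sinh x / x := sinh_div_self_pos hx
  have hM := logDerivMulNum_pos hx
  have hD := logDerivDivNum_pos hx
  rw [← log_lt_log_iff hM (by positivity), log_mul (by positivity) hD.ne',
    log_mul two_ne_zero (by positivity), log_rpow hS]
  linarith

lemma two_mul_sinh_div_self_rpow_sub_one_pos (hx : 0 < x) :
    0 < 2 * (sinh x / x) ^ ((6 : ℝ) / 5) - 1 := by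
  linarith [one_lt_rpow (one_lt_sinh_div_self hx) (by norm_num : (0 : ℝ) < 6 / 5)]

lemma logDeriv_two_mul_sinh_div_self_rpow_sub_one_lt (hx : 0 < x) :
    2 * (6 / 5 * (cosh x / sinh x - 1 / x) * (sinh x / x) ^ ((6 : ℝ) / 5))
        / (2 * (sinh x / x) ^ ((6 : ℝ) / 5) - 1) <
      3 / 5 * (sinh x / cosh x + (cosh x / sinh x - 1 / x)) := by
  have := sinh_pos_iff.2 hx
  have := cosh_pos x
  have hpos := two_mul_sinh_div_self_rpow_sub_one_pos hx
  have hlt := sub_pos.2 (logDerivMulNum_lt hx)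
  unfold logDerivMulNum logDerivDivNum at hlt
  generalize (sinh x / x) ^ ((6 : ℝ) / 5) = P at *
  refine sub_pos.1 ((div_pos (mul_pos three_pos hlt) (by positivity :
    0 < 5 * (2 * P - 1) * x * sinh x * cosh x)).trans_eq ?_)
  field_simp
  linear_combination 6 * P * x * cosh_sq x

lemma two_mul_sinh_div_self_rpow_sub_one_lt (hx : 0 < x) :
    2 * (sinh x / x) ^ ((6 : ℝ) / 5) - 1 < (cosh x * (sinh x / x)) ^ ((3 : ℝ) / 5) := by
  have hderiv (y : ℝ) (hy : 0 < y) : HasDerivAt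
      (fun y ↦ 3 / 5 * (log (cosh y) + log (sinh y / y))
        - log (2 * (sinh y / y) ^ ((6 : ℝ) / 5) - 1))
      (3 / 5 * (sinh y / cosh y + (cosh y / sinh y - 1 / y))
        - 2 * (6 / 5 * (cosh y / sinh y - 1 / y) * (sinh y / y) ^ ((6 : ℝ) / 5))
          / (2 * (sinh y / y) ^ ((6 : ℝ) / 5) - 1)) y :=
    ((((hasDerivAt_cosh y).log (cosh_pos y).ne').add
      (hasDerivAt_log_sinh_div_self hy)).const_mul (3 / 5)).sub
      ((((hasDerivAt_sinh_div_self_rpow (6 / 5) hy).const_mul 2).sub_const 1).log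
        (two_mul_sinh_div_self_rpow_sub_one_pos hy).ne')
  have hlim : Tendsto (fun y ↦ 3 / 5 * (log (cosh y) + log (sinh y / y))
      - log (2 * (sinh y / y) ^ ((6 : ℝ) / 5) - 1)) (𝓝[>] 0) (𝓝 0) := by
    have hcosh : Tendsto cosh (𝓝[>] 0) (𝓝 (cosh 0)) :=
      (continuous_cosh.tendsto 0).mono_left nhdsWithin_le_nhds
    have hrpow := ((tendsto_sinh_div_self.rpow_const (p := 6 / 5)
      (Or.inl one_ne_zero)).const_mul 2).sub_const 1
    simpa [show (2 : ℝ) - 1 = 1 by norm_num] using (((hcosh.log (cosh_pos 0).ne').add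
      (tendsto_sinh_div_self.log one_ne_zero)).const_mul (3 / 5)).sub
      (hrpow.log (by norm_num))
  have h := lt_of_tendsto_of_hasDerivAt_pos hderiv
    (fun y hy ↦ sub_pos.2 (logDeriv_two_mul_sinh_div_self_rpow_sub_one_lt hy)) hlim hx
  have hS : 0 < sinh x / x := sinh_div_self_pos hx
  have hcS := mul_pos (cosh_pos x) hS
  rwa [sub_pos, ← log_mul (cosh_pos x).ne' hS.ne', ← log_rpow hcS,
    log_lt_log_iff (two_mul_sinh_div_self_rpow_sub_one_pos hx) (rpow_pos_of_pos hcS _)] at h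

theorem sinh_div_self_lt_Hfun_three_fifths (hx : 0 < x) : sinh x / x < Hfun (3 / 5) (cosh x) := by
  have hS : 0 < sinh x / x := sinh_div_self_pos hx
  have h := two_mul_sinh_div_self_rpow_sub_one_lt hx
  rw [show (6 : ℝ) / 5 = 3 / 5 * 2 by norm_num, rpow_mul hS.le, rpow_two,
    mul_rpow (cosh_pos x).le hS.le] at h
  rw [lt_Hfun_iff (by norm_num) hS (cosh_pos x)]
  have hpow := rpow_pos_of_pos hS (3 / 5)
  refine lt_of_mul_lt_mul_right (h.trans_eq' ?_) hpow.le
  field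

end SharpUpperBound

section Sharpness

lemma ringChoose_two (p : ℝ) : Ring.choose p 2 = p * (p - 1) / 2 := by
  simp only [Ring.choose_eq_smul, Nat.factorial_two, Nat.cast_ofNat, descPochhammer_succ_right,
    descPochhammer_zero, CharP.cast_eq_zero, sub_zero, one_mul, Nat.cast_one,
    Polynomial.smeval_mul, Polynomial.smeval_X, pow_one, Polynomial.smeval_sub,
    Polynomial.smeval_one, pow_zero, one_smul, smul_eq_mul]
  ring

lemma one_add_rpow_sub_isLittleO (p : ℝ) :
    (fun u : ℝ ↦ (1 + u) ^ p - (1 + p * u + p * (p - 1) / 2 * u ^ 2)) =o[𝓝 0] fun u ↦ u ^ 2 := by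
  have hO := (one_add_rpow_hasFPowerSeriesAt_zero (a := p)).isBigO_sub_partialSum_pow 3
  simp only [← norm_pow] at hO
  refine (hO.of_norm_right.trans_isLittleO (isLittleO_pow_pow (by norm_num))).congr_left fun u ↦ ?_
  simp only [zero_add, FormalMultilinearSeries.partialSum, binomialSeries,
    FormalMultilinearSeries.apply_eq_prod_smul_coeff, Finset.prod_const, Finset.card_univ,
    Fintype.card_fin, FormalMultilinearSeries.coeff_ofScalars, smul_eq_mul,
    Finset.sum_range_succ, Finset.range_one, Finset.sum_singleton, pow_zero,
    Ring.choose_zero_right', mul_one, pow_one, Ring.choose_one_right', ringChoose_two,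
    sub_right_inj]
  ring

lemma rpow_sub_isLittleO {ι : Type*} {l : Filter ι} {f z : ι → ℝ} {a b : ℝ} (p : ℝ)
    (hz : Tendsto z l (𝓝 0))
    (hf : (fun i ↦ f i - (1 + a * z i + b * z i ^ 2)) =o[l] fun i ↦ z i ^ 2) :
    (fun i ↦ f i ^ p - (1 + p * a * z i + (p * b + p * (p - 1) / 2 * a ^ 2) * z i ^ 2))
      =o[l] fun i ↦ z i ^ 2 := by
  have hsq : (fun i ↦ z i ^ 2) =o[l] z := by
    simpa only [pow_two, mul_one] using (isBigO_refl z l).mul_isLittleO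
      ((isLittleO_one_iff ℝ).2 hz)
  have hlin : (fun i ↦ f i - 1 - a * z i) =o[l] z :=
    ((hf.trans hsq).add (hsq.const_mul_left b)).congr_left fun i ↦ by ring
  have hbig : (fun i ↦ f i - 1) =O[l] z :=
    (hlin.isBigO.add ((isBigO_refl z l).const_mul_left a)).congr_left fun i ↦ by ring
  have hsquare : (fun i ↦ (f i - 1) ^ 2 - a ^ 2 * z i ^ 2) =o[l] fun i ↦ z i ^ 2 :=
    (hlin.mul_isBigO (hbig.add ((isBigO_refl z l).const_mul_left a))).congr
      (fun i ↦ by ring) fun i ↦ by ring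
  have hrpow := ((one_add_rpow_sub_isLittleO p).comp_tendsto (hbig.trans_tendsto hz)).trans_isBigO
    (hbig.pow 2)
  refine ((hrpow.add (hf.const_mul_left p)).add
    (hsquare.const_mul_left (p * (p - 1) / 2))).congr_left fun i ↦ ?_
  simp only [Function.comp_apply, add_sub_cancel]
  ring

lemma taylorWithinEval_cosh_four (x : ℝ) :
    taylorWithinEval cosh 4 univ 0 x = 1 + 1 / 2 * x ^ 2 + 1 / 24 * x ^ 4 := by
  norm_num [taylorWithinEval_succ, iteratedDerivWithin_univ, iteratedDeriv_succ, Nat.factorial]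

lemma taylorWithinEval_sinh_five (x : ℝ) :
    taylorWithinEval sinh 5 univ 0 x = x + 1 / 6 * x ^ 3 + 1 / 120 * x ^ 5 := by
  norm_num [taylorWithinEval_succ, iteratedDerivWithin_univ, iteratedDeriv_succ, Nat.factorial]

lemma cosh_sub_isLittleO :
    (fun x ↦ cosh x - (1 + 1 / 2 * x ^ 2 + 1 / 24 * (x ^ 2) ^ 2)) =o[𝓝 0]
      fun x ↦ (x ^ 2) ^ 2 := by
  refine (taylor_isLittleO_univ (x₀ := 0) (contDiff_cosh (n := 4))).congr
    (fun x ↦ ?_) fun x ↦ by ring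
  rw [taylorWithinEval_cosh_four]
  ring

lemma sinh_div_self_sub_isLittleO :
    (fun x ↦ sinh x / x - (1 + 1 / 6 * x ^ 2 + 1 / 120 * (x ^ 2) ^ 2)) =o[𝓝[≠] 0]
      fun x ↦ (x ^ 2) ^ 2 := by
  have h := ((taylor_isLittleO_univ (x₀ := 0) (contDiff_sinh (n := 5))).mono
    nhdsWithin_le_nhds).mul_isBigO (isBigO_refl (fun x : ℝ ↦ x⁻¹) (𝓝[≠] 0))
  refine h.congr' ?_ ?_
  all_goals
    filter_upwards [self_mem_nhdsWithin] with x hx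
    have : x ≠ 0 := hx
  · rw [taylorWithinEval_sinh_five]
    field
  · rw [sub_zero]
    field

lemma nonpos_of_isLittleO_sub_mul {ι : Type*} {l : Filter ι} [l.NeBot] {f w : ι → ℝ} {k : ℝ}
    (h : (fun i ↦ f i - k * w i) =o[l] w) (hf : ∀ᶠ i in l, f i ≤ 0) (hw : ∀ᶠ i in l, 0 < w i) :
    k ≤ 0 := by
  have hlim := h.tendsto_div_nhds_zero.const_add k
  rw [add_zero] at hlim
  refine le_of_tendsto hlim ?_
  filter_upwards [hf, hw] with i hfi hwi
  have : k + (f i - k * w i) / w i = f i / w i := by field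
  exact this ▸ div_nonpos_of_nonpos_of_nonneg hfi hwi.le

lemma two_mul_sinh_div_self_rpow_sub_isLittleO (r : ℝ) :
    (fun x ↦ 2 * (sinh x / x) ^ r - ((sinh x / x) ^ r)⁻¹ - cosh x ^ r
      - (r / 15 - r ^ 2 / 9) * (x ^ 2) ^ 2) =o[𝓝[>] 0] fun x ↦ (x ^ 2) ^ 2 := by
  have hz : Tendsto (fun x : ℝ ↦ x ^ 2) (𝓝[>] 0) (𝓝 0) := by
    simpa using ((continuous_pow 2).tendsto (0 : ℝ)).mono_left nhdsWithin_le_nhds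
  have hS (p : ℝ) := rpow_sub_isLittleO p hz
    (sinh_div_self_sub_isLittleO.mono (nhdsWithin_mono 0 fun x hx ↦ ne_of_gt hx))
  refine ((((hS r).const_mul_left 2).sub (hS (-r))).sub
    (rpow_sub_isLittleO r hz (cosh_sub_isLittleO.mono nhdsWithin_le_nhds))).congr' ?_ .rfl
  filter_upwards [self_mem_nhdsWithin] with x hx
  rw [rpow_neg (sinh_div_self_pos hx).le]
  ring

theorem nonpos_of_forall_Hfun_cosh_lt_sinh_div_self {α : ℝ}
    (h : ∀ x ∈ Ioi (0 : ℝ), Hfun α (cosh x) < sinh x / x) : α ≤ 0 := by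
  by_contra! hα
  set x : ℝ := 2 ^ (1 / α)
  have hx : 0 < x := by positivity
  have hlt := (div_two_rpow_le_Hfun hα (cosh_pos x)).trans_lt (h x hx)
  exact (div_lt_div_of_pos_right (sinh_lt_cosh x) hx).not_gt hlt

theorem three_fifths_le_of_forall_sinh_div_self_lt_Hfun_cosh {β : ℝ}
    (h : ∀ x ∈ Ioi (0 : ℝ), sinh x / x < Hfun β (cosh x)) : 3 / 5 ≤ β := by
  have hβ : 0 < β := by
    by_contra! hβ
    have hle := Hfun_monotone (cosh_pos 1) hβ
    have hlt := h 1 (mem_Ioi.2 one_pos)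
    have := cosh_rpow_one_third_lt_sinh_div_self one_pos
    simp only [Hfun_zero] at hle
    linarith
  have hcoeff : β / 15 - β ^ 2 / 9 ≤ 0 := by
    refine nonpos_of_isLittleO_sub_mul (two_mul_sinh_div_self_rpow_sub_isLittleO β) ?_ ?_
    · filter_upwards [self_mem_nhdsWithin] with x hx
      have := (lt_Hfun_iff hβ (sinh_div_self_pos hx) (cosh_pos x)).1 (h x hx)
      linarith
    · filter_upwards [self_mem_nhdsWithin] with x hx
      exact pow_pos (pow_pos hx 2) 2
  nlinarith

end Sharpness

theorem Hfun_sinh_bounds (α β : ℝ) :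
    (∀ x ∈ Ioi (0 : ℝ),
        Hfun α (cosh x) < sinh x / x ∧ sinh x / x < Hfun β (cosh x)) ↔
      (α ≤ 0 ∧ β ≥ 3 / 5) := by
  refine ⟨fun h ↦ ⟨nonpos_of_forall_Hfun_cosh_lt_sinh_div_self fun x hx ↦ (h x hx).1,
    three_fifths_le_of_forall_sinh_div_self_lt_Hfun_cosh fun x hx ↦ (h x hx).2⟩, ?_⟩
  rintro ⟨hα, hβ⟩ x hx
  constructor
  · calc Hfun α (cosh x) ≤ Hfun 0 (cosh x) := Hfun_monotone (cosh_pos x) hα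
      _ = cosh x ^ ((1 : ℝ) / 3) := Hfun_zero _
      _ < sinh x / x := cosh_rpow_one_third_lt_sinh_div_self hx
  · calc sinh x / x < Hfun (3 / 5) (cosh x) := sinh_div_self_lt_Hfun_three_fifths hx
      _ ≤ Hfun β (cosh x) := Hfun_monotone (cosh_pos x) hβ
end
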